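/- arXiv:1610.01916 — 3 statements merged into one kernel-verified Lean document; each statement's English description precedes it below -/
import Mathlib

section
/- Division of holomorphic germs via boundedness on an argument level set (Lemma 2.2): Let d ≥ 1, r > 0 and θ ∈ ℝ. Let f and g be holomorphic on the polydisk D(0;r) ⊆ ℂ^d with f(0) = g(0) = 0 and g not identically zero, and suppose there is a constant M > 0 such that |f(x)| ≤ M·|g(x)| for every x ∈ D(0;r) with g(x) ≠ 0 and g(x) = |g(x)|·e^{iθ}. Then there exist ρ with 0 < ρ ≤ r and a holomorphic function q on D(0;ρ) such that f(x) = q(x)·g(x) for all x ∈ D(0;ρ). -/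
open Set Complex

noncomputable section

/-- Open polydisk of radius `r` centered at `0` in `ℂ^d`. -/
def polydisk (d : ℕ) (r : ℝ) : Set (Fin d → ℂ) :=
  {x | ∀ j, ‖x j‖ < r}


/-!
Restrict `f` and `g` to a complex line on which `g` does not vanish identically. By the open mapping
theorem `g` takes values in the level set arbitrarily close to each of its zeros there, so `f / g`
cannot tend to infinity at such a zero: its singularities on the line are removable, and the mean
value property recovers its value at the centre of a disc from its values on the boundary circle.
If `g` has no zero on the circle `x₀ + ε S¹ v`, the same holds on all nearby parallel circles, so
the quotient near `x₀` is `x ↦ ⨍ f (x + t v) / g (x + t v)` over `|t| = ε`. This is analytic in `x`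
because an analytic germ at `x₀` acts analytically, by composition, on continuous loops near the
constant loop `x₀`. Local quotients glue, since `g` vanishes identically near no point.
-/

open Filter Topology MeasureTheory Metric

section Superposition

variable {𝕜 K E F : Type*} [TopologicalSpace K] [NormedAddCommGroup E] [NormedAddCommGroup F]

open Classical in
/-- The superposition (Nemytskii) operator `u ↦ g ∘ u` on spaces of continuous functions, with the
junk value `0` at those `u` for which `g ∘ u` is not continuous. -/
def superposition (g : E → F) (u : C(K, E)) : C(K, F) :=
  if h : Continuous (g ∘ u) then ⟨g ∘ u, h⟩ else 0

lemma superposition_apply {g : E → F} {u : C(K, E)} (h : Continuous (g ∘ u)) (s : K) :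
    superposition g u s = g (u s) := by
  rw [superposition, dif_pos h]
  rfl

variable [NontriviallyNormedField 𝕜] [CompactSpace K] [NormedSpace 𝕜 E] [NormedSpace 𝕜 F]

/-- The pointwise action `(u₁, …, uₙ) ↦ m (u₁ ·, …, uₙ ·)` of a continuous multilinear map `m` on
continuous functions. -/
def pointwiseMultilinear {n : ℕ} (m : E [×n]→L[𝕜] F) : C(K, E) [×n]→L[𝕜] C(K, F) :=
  MultilinearMap.mkContinuous
    { toFun := fun u => ⟨fun s => m fun i => u i s, by fun_prop⟩
      map_update_add' := fun u i v w => by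
        ext s
        simp [Function.apply_update (fun _ (w : C(K, E)) => w s)]
      map_update_smul' := fun u i c v => by
        ext s
        simp [Function.apply_update (fun _ (w : C(K, E)) => w s)] }
    ‖m‖ fun u => (ContinuousMap.norm_le _ (by positivity)).2 fun s =>
      (m.le_opNorm _).trans <| by
        gcongr with i
        exact (u i).norm_coe_le_norm s

lemma norm_pointwiseMultilinear_le {n : ℕ} (m : E [×n]→L[𝕜] F) :
    ‖pointwiseMultilinear (K := K) m‖ ≤ ‖m‖ :=
  MultilinearMap.mkContinuous_norm_le _ (norm_nonneg m) _

variable [CompleteSpace F]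

lemma hasFPowerSeriesOnBall_superposition {g : E → F} {p : FormalMultilinearSeries 𝕜 E F} {c : E}
    {r : ENNReal} (hp : HasFPowerSeriesOnBall g p c r) :
    HasFPowerSeriesOnBall (superposition g) (fun n => pointwiseMultilinear (p n))
      (ContinuousMap.const K c) r := by
  let P : FormalMultilinearSeries 𝕜 C(K, E) C(K, F) := fun n => pointwiseMultilinear (p n)
  have hr : r ≤ P.radius := hp.r_le.trans <|
    FormalMultilinearSeries.radius_le_of_le fun n => norm_pointwiseMultilinear_le (p n)
  refine ⟨hr, hp.r_pos, fun {u} hu => ?_⟩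
  have hsum : HasSum (fun n => P n fun _ => u) (P.sum u) :=
    P.hasSum (eball_subset_eball hr hu)
  have hsum_apply (s : K) : P.sum u s = g (c + u s) := by
    have hus : u s ∈ eball (0 : E) r := by
      rw [mem_eball, edist_zero_right] at hu ⊢
      exact (enorm_le_iff_norm_le.2 (u.norm_coe_le_norm s)).trans_lt hu
    exact (hsum.mapL (ContinuousMap.evalCLM 𝕜 s)).unique (hp.hasSum hus)
  have hcomp : g ∘ (ContinuousMap.const K c + u) = P.sum u := funext fun s => (hsum_apply s).symm
  have hsuper : superposition g (ContinuousMap.const K c + u) = P.sum u := by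
    ext s
    rw [superposition_apply (hcomp ▸ (P.sum u).continuous), hsum_apply]
    rfl
  exact hsuper ▸ hsum

lemma analyticAt_superposition {g : E → F} {c : E} (hg : AnalyticAt 𝕜 g c) :
    AnalyticAt 𝕜 (superposition g) (ContinuousMap.const K c) :=
  let ⟨_, _, hp⟩ := hg
  (hasFPowerSeriesOnBall_superposition hp).analyticAt

lemma eventually_superposition_apply {g : E → F} {c : E} (hg : AnalyticAt 𝕜 g c) :
    ∀ᶠ u in 𝓝 (ContinuousMap.const K c), ∀ s, superposition g u s = g (u s) := by
  obtain ⟨δ, hδ, hgδ⟩ := eventually_nhds_iff_ball.1 hg.eventually_analyticAt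
  filter_upwards [ball_mem_nhds _ hδ] with u hu
  have hus (s : K) : u s ∈ ball c δ := (ContinuousMap.dist_apply_le_dist s).trans_lt hu
  exact superposition_apply <| continuous_iff_continuousAt.2 fun s =>
    (hgδ _ (hus s)).continuousAt.comp u.continuous.continuousAt

lemma eventually_analyticAt_superposition_translate {f : E → F} {x₀ : E}
    (hf : AnalyticAt 𝕜 f x₀) :
    ∀ᶠ γ in 𝓝 (0 : C(K, E)),
      AnalyticAt 𝕜 (fun x => superposition f (ContinuousMap.const K x + γ)) x₀ ∧
      ∀ᶠ x in 𝓝 x₀, ∀ s, superposition f (ContinuousMap.const K x + γ) s = f (x + γ s) := by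
  have hlocal := (analyticAt_superposition (K := K) hf).eventually_analyticAt.and
    (eventually_superposition_apply hf).eventually_nhds
  have htranslate : Tendsto (fun γ => ContinuousMap.const K x₀ + γ) (𝓝 0)
      (𝓝 (ContinuousMap.const K x₀)) := by
    simpa using tendsto_const_nhds.add (tendsto_id (α := C(K, E)) (x := 𝓝 0))
  filter_upwards [htranslate.eventually hlocal] with γ ⟨hanalytic, happly⟩
  have hshift : AnalyticAt 𝕜 (fun x => ContinuousMap.const K x + γ) x₀ :=
    ((ContinuousLinearMap.const 𝕜 K).analyticAt x₀).add analyticAt_const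
  exact ⟨hanalytic.comp_of_eq hshift rfl, hshift.continuousAt.eventually happly⟩

end Superposition

section AnalyticAverage

variable {E K : Type*} [NormedAddCommGroup E] [NormedSpace ℂ E]
  [TopologicalSpace K] [CompactSpace K]

lemma analyticAt_integral_continuousMap {F : Type*} [NormedAddCommGroup F] [NormedSpace ℂ F]
    [CompleteSpace F] [SecondCountableTopologyEither K F] [MeasurableSpace K] [BorelSpace K]
    {μ : Measure K} [IsFiniteMeasure μ] {Φ : E → C(K, F)} {x₀ : E} (hΦ : AnalyticAt ℂ Φ x₀) :
    AnalyticAt ℂ (fun x => ∫ s, Φ x s ∂μ) x₀ := by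
  let integralCLM : C(K, F) →L[ℂ] F := (L1.integralCLM' ℂ).comp (ContinuousMap.toLp 1 μ ℂ)
  have integralCLM_apply (u : C(K, F)) : integralCLM u = ∫ s, u s ∂μ := by
    rw [← integral_congr_ae (ContinuousMap.coeFn_toLp μ u (p := 1) (𝕜 := ℂ))]
    exact (L1.integral_eq' ℂ _).symm.trans (L1.integral_eq_integral _)
  simpa only [Function.comp_def, integralCLM_apply] using
    (integralCLM.analyticAt (Φ x₀)).comp hΦ

lemma eventually_analyticAt_integral_div [MeasurableSpace K] [BorelSpace K] (μ : Measure K)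
    [IsFiniteMeasure μ] {f g : E → ℂ} {x₀ : E} (hf : AnalyticAt ℂ f x₀)
    (hg : AnalyticAt ℂ g x₀) :
    ∀ᶠ γ in 𝓝 (0 : C(K, E)), (∀ s, g (x₀ + γ s) ≠ 0) →
      AnalyticAt ℂ (fun x => ∫ s, f (x + γ s) / g (x + γ s) ∂μ) x₀ := by
  filter_upwards [eventually_analyticAt_superposition_translate hf,
    eventually_analyticAt_superposition_translate hg] with γ ⟨hf_an, hf_apply⟩ ⟨hg_an, hg_apply⟩ hγ
  have hunit : IsUnit (superposition g (ContinuousMap.const K x₀ + γ)) := by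
    rw [ContinuousMap.isUnit_iff_forall_ne_zero]
    intro s
    rw [hg_apply.self_of_nhds]
    exact hγ s
  have hinv := (analyticOnNhd_inverse (𝕜 := ℂ) _ hunit).comp_of_eq hg_an rfl
  refine (analyticAt_integral_continuousMap (μ := μ) (hf_an.mul hinv)).congr ?_
  filter_upwards [hf_apply, hg_apply,
    hg_an.continuousAt.eventually (Units.isOpen.mem_nhds hunit)] with x hfx hgx hunit_x
  refine integral_congr_ae (.of_forall fun s => ?_)
  have hmul_inv := congrArg (fun u : C(K, ℂ) => u s) (Ring.mul_inverse_cancel _ hunit_x)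
  simp only [ContinuousMap.mul_apply, ContinuousMap.one_apply, hgx] at hmul_inv
  simp only [Pi.mul_apply, Function.comp_apply, ContinuousMap.mul_apply, hfx, div_eq_mul_inv,
    eq_inv_of_mul_eq_one_right hmul_inv]

lemma circleAverage_eq_integral_unitInterval {F : Type*} [NormedAddCommGroup F] [NormedSpace ℝ F]
    (h : ℂ → F) (c : ℂ) (ε : ℝ) :
    Real.circleAverage h c ε = ∫ s : unitInterval, h (circleMap c ε (2 * Real.pi * s)) := by
  rw [unitInterval.volume_def, integral_subtype_comap measurableSet_Icc
      fun s => h (circleMap c ε (2 * Real.pi * s)), integral_Icc_eq_integral_Ioc,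
    ← intervalIntegral.integral_of_le zero_le_one,
    intervalIntegral.integral_comp_mul_left (fun θ => h (circleMap c ε θ)) Real.two_pi_pos.ne',
    mul_zero, mul_one, Real.circleAverage_def]

lemma eventually_analyticAt_circleAverage_div {f g : E → ℂ} {x₀ : E} (hf : AnalyticAt ℂ f x₀)
    (hg : AnalyticAt ℂ g x₀) (v : E) :
    ∀ᶠ ε : ℝ in 𝓝 0, (∀ t ∈ sphere (0 : ℂ) |ε|, g (x₀ + t • v) ≠ 0) →
      AnalyticAt ℂ
        (fun x => Real.circleAverage (fun t => f (x + t • v) / g (x + t • v)) 0 ε) x₀ := by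
  let loop : C(ℝ, C(unitInterval, E)) :=
    ContinuousMap.curry ⟨fun p => circleMap 0 p.1 (2 * Real.pi * p.2) • v, by
      unfold circleMap
      fun_prop⟩
  have hloop : Tendsto loop (𝓝 0) (𝓝 0) := by
    have hloop_zero : loop 0 = 0 := by
      ext s
      simp [loop]
    exact hloop_zero ▸ loop.continuous.tendsto 0
  filter_upwards [hloop.eventually (eventually_analyticAt_integral_div volume hf hg)]
    with ε hε hsphere
  simp only [circleAverage_eq_integral_unitInterval]
  exact hε fun s => hsphere _ (circleMap_mem_sphere' 0 ε _)

end AnalyticAverage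

section GermDivision

lemma eq_of_mul_eventuallyEq_mul {X R : Type*} [TopologicalSpace X] [TopologicalSpace R] [T2Space R]
    [MulZeroClass R] [IsRightCancelMulZero R] {q₁ q₂ g : X → R} {x₀ : X}
    (hq₁ : ContinuousAt q₁ x₀) (hq₂ : ContinuousAt q₂ x₀) (hg : ∃ᶠ x in 𝓝 x₀, g x ≠ 0)
    (h : q₁ * g =ᶠ[𝓝 x₀] q₂ * g) : q₁ x₀ = q₂ x₀ :=
  tendsto_nhds_unique_of_frequently_eq hq₁ hq₂ <|
    (hg.and_eventually h).mono fun _ ⟨hgx, hx⟩ => mul_right_cancel₀ hgx hx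

variable {𝕜 E : Type*} [NontriviallyNormedField 𝕜] [NormedAddCommGroup E] [NormedSpace 𝕜 E]

/-- `g` divides `f` in the ring of germs at `x` of `𝕜`-analytic functions. The functions `f` and `g`
themselves are not required to be analytic at `x`. -/
def GermDvdAt (g f : E → 𝕜) (x : E) : Prop :=
  ∃ q : E → 𝕜, AnalyticAt 𝕜 q x ∧ f =ᶠ[𝓝 x] q * g

variable {f g : E → 𝕜} {x₀ : E} {U : Set E}

lemma frequently_ne_zero_of_isPreconnected (hg : AnalyticOnNhd 𝕜 g U) (hU : IsPreconnected U)
    (hgne : ∃ x ∈ U, g x ≠ 0) (hx₀ : x₀ ∈ U) : ∃ᶠ x in 𝓝 x₀, g x ≠ 0 := by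
  obtain ⟨y, hyU, hgy⟩ := hgne
  intro hzero
  exact hgy <| hg.eqOn_zero_of_preconnected_of_eventuallyEq_zero hU hx₀
    (hzero.mono fun _ => not_not.1) hyU

lemma exists_analyticOnNhd_eqOn_mul_of_germDvdAt [CompleteSpace 𝕜] (hUo : IsOpen U)
    (hUc : IsPreconnected U) (hg : AnalyticOnNhd 𝕜 g U) (hgne : ∃ x ∈ U, g x ≠ 0)
    (hdvd : ∀ x ∈ U, GermDvdAt g f x) :
    ∃ q : E → 𝕜, AnalyticOnNhd 𝕜 q U ∧ EqOn f (q * g) U := by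
  choose! q hq hfq using hdvd
  refine ⟨fun x => q x x, fun x hx => (hq x hx).congr ?_, fun x hx => (hfq x hx).eq_of_nhds⟩
  filter_upwards [hUo.mem_nhds hx, (hq x hx).eventually_analyticAt, (hfq x hx).eventually_nhds]
    with y hy hqy hfy
  exact eq_of_mul_eventuallyEq_mul hqy.continuousAt (hq y hy).continuousAt
    (frequently_ne_zero_of_isPreconnected hg hUc hgne hy)
    (EventuallyEq.trans (.symm hfy) (hfq y hy))

end GermDivision

section OneVariable

lemma frequently_ne_and_mem_of_accPt {E : Type*} [NormedAddCommGroup E] [NormedSpace ℂ E]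
    {g : E → ℂ} {x₀ : E} {S : Set ℂ} (hg : AnalyticAt ℂ g x₀) (hgne : ∃ᶠ x in 𝓝 x₀, g x ≠ g x₀)
    (hS : AccPt (g x₀) (𝓟 S)) : ∃ᶠ x in 𝓝 x₀, g x ≠ g x₀ ∧ g x ∈ S := by
  have hopen : 𝓝 (g x₀) ≤ map g (𝓝 x₀) :=
    hg.eventually_constant_or_nhds_le_map_nhds.resolve_left fun hconst =>
      hgne (hconst.mono fun _ => not_not.2)
  exact frequently_map.1 ((accPt_iff_frequently.1 hS).filter_mono hopen)

variable {f g : ℂ → ℂ} {z₀ : ℂ} {S : Set ℂ} {M : ℝ}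

lemma meromorphicOrderAt_div_nonneg_of_norm_le (hf : AnalyticAt ℂ f z₀) (hg : AnalyticAt ℂ g z₀)
    (hgne : ∃ᶠ z in 𝓝 z₀, g z ≠ 0) (hS : AccPt 0 (𝓟 S))
    (hbound : ∀ᶠ z in 𝓝 z₀, g z ∈ S → ‖f z‖ ≤ M * ‖g z‖) :
    0 ≤ meromorphicOrderAt (f / g) z₀ := by
  by_cases hg0 : g z₀ = 0
  swap
  · exact (hf.div hg hg0).meromorphicOrderAt_nonneg
  by_contra! hneg
  rw [← tendsto_cobounded_iff_meromorphicOrderAt_neg (hf.meromorphicAt.div hg.meromorphicAt),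
    ← tendsto_norm_atTop_iff_cobounded] at hneg
  have hlarge := eventually_nhdsWithin_iff.1 (hneg.eventually_gt_atTop M)
  have hvalues : ∃ᶠ z in 𝓝 z₀, g z ≠ 0 ∧ g z ∈ S := by
    simpa only [hg0] using
      frequently_ne_and_mem_of_accPt hg (hg0.symm ▸ hgne) (hg0.symm ▸ hS)
  obtain ⟨z, ⟨hgz, hgS⟩, hle, hlt⟩ :=
    (hvalues.and_eventually (hbound.and hlarge)).exists
  have hM : M < ‖f z‖ / ‖g z‖ := by
    simpa using hlt (by rintro rfl; exact hgz hg0)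
  exact ((lt_div_iff₀ (norm_pos_iff.2 hgz)).1 hM).not_ge (hle hgS)

lemma germDvdAt_complex_of_norm_le (hf : AnalyticAt ℂ f z₀) (hg : AnalyticAt ℂ g z₀)
    (hgne : ∃ᶠ z in 𝓝 z₀, g z ≠ 0) (hS : AccPt 0 (𝓟 S))
    (hbound : ∀ᶠ z in 𝓝 z₀, g z ∈ S → ‖f z‖ ≤ M * ‖g z‖) :
    GermDvdAt g f z₀ := by
  have hmero : MeromorphicAt (f / g) z₀ := hf.meromorphicAt.div hg.meromorphicAt
  have hq : AnalyticAt ℂ (toMeromorphicNFAt (f / g) z₀) z₀ :=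
    hmero.meromorphicOrderAt_nonneg_iff_analyticAt_toMeromorphicNFAt.1
      (meromorphicOrderAt_div_nonneg_of_norm_le hf hg hgne hS hbound)
  have hg_ne : ∀ᶠ z in 𝓝[≠] z₀, g z ≠ 0 :=
    hg.eventually_eq_zero_or_eventually_ne_zero.resolve_left fun hzero =>
      hgne (hzero.mono fun _ => not_not.2)
  refine ⟨_, hq, (hf.continuousAt.eventuallyEq_nhds_iff_eventuallyEq_nhdsNE
    (hq.mul hg).continuousAt).1 ?_⟩
  filter_upwards [hmero.eq_nhdsNE_toMeromorphicNFAt, hg_ne] with z hz hgz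
  rw [Pi.mul_apply, ← hz, Pi.div_apply, div_mul_cancel₀ _ hgz]

lemma eq_circleAverage_div_mul {q : ℂ → ℂ} {c : ℂ} {ε : ℝ}
    (hq : AnalyticOnNhd ℂ q (closedBall c |ε|)) (hfq : EqOn f (q * g) (closedBall c |ε|))
    (hg : ∀ z ∈ sphere c |ε|, g z ≠ 0) :
    f c = Real.circleAverage (fun z => f z / g z) c ε * g c := by
  have hdiv : EqOn (fun z => f z / g z) q (sphere c |ε|) := fun z hz =>
    (div_eq_iff (hg z hz)).2 (hfq (sphere_subset_closedBall hz))
  rw [Real.circleAverage_congr_sphere hdiv,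
    (hq.differentiableOn.diffContOnCl_ball Subset.rfl).circleAverage]
  exact hfq (mem_closedBall_self (abs_nonneg ε))

end OneVariable

section SeveralVariables

lemma eventually_forall_sphere_of_nhdsNE {E : Type*} [NormedAddCommGroup E] {P : E → Prop}
    (hP : ∀ᶠ t in 𝓝[≠] 0, P t) :
    ∀ᶠ ε : ℝ in 𝓝[≠] 0, ∀ t ∈ sphere (0 : E) |ε|, P t := by
  obtain ⟨δ, hδ, hPδ⟩ := eventually_nhds_iff_ball.1 (eventually_nhdsWithin_iff.1 hP)
  filter_upwards [self_mem_nhdsWithin, nhdsWithin_le_nhds (ball_mem_nhds 0 hδ)] with ε hε0 hεδ t ht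
  rw [mem_sphere_zero_iff_norm] at ht
  refine hPδ t ?_ ?_
  · rwa [mem_ball_zero_iff, ht, ← Real.norm_eq_abs, ← mem_ball_zero_iff]
  · rintro rfl
    exact hε0 (by simpa using ht.symm)

variable {E : Type*} [NormedAddCommGroup E] [NormedSpace ℂ E] {f g : E → ℂ} {x₀ v : E}
  {U : Set E} {S : Set ℂ} {M r ε : ℝ}

lemma isOpen_slice (hU : IsOpen U) (x v : E) : IsOpen {t : ℂ | x + t • v ∈ U} :=
  hU.preimage (by fun_prop)

lemma isPreconnected_slice (hU : Convex ℝ U) (x v : E) :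
    IsPreconnected {t : ℂ | x + t • v ∈ U} := by
  let line : ℂ →ᵃ[ℝ] E :=
    ((LinearMap.toSpanSingleton ℂ E v).restrictScalars ℝ).toAffineMap + AffineMap.const ℝ ℂ x
  have hline (t : ℂ) : line t = x + t • v := add_comm _ _
  simpa only [preimage, hline] using (hU.affine_preimage line).isPreconnected

lemma analyticOnNhd_slice (hf : AnalyticOnNhd ℂ f U) (x v : E) :
    AnalyticOnNhd ℂ (fun t : ℂ => f (x + t • v)) {t | x + t • v ∈ U} := fun _ ht =>
  (hf _ ht).comp_of_eq (by fun_prop) rfl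

lemma exists_direction_eventually_ne_zero (hg : AnalyticAt ℂ g x₀)
    (hgne : ∃ᶠ x in 𝓝 x₀, g x ≠ 0) : ∃ v, ∀ᶠ t : ℂ in 𝓝[≠] 0, g (x₀ + t • v) ≠ 0 := by
  obtain ⟨δ, hδ, hgδ⟩ := eventually_nhds_iff_ball.1 hg.eventually_analyticAt
  obtain ⟨y, hgy, hy⟩ := (hgne.and_eventually (ball_mem_nhds x₀ hδ)).exists
  have hslice := analyticOnNhd_slice hgδ x₀ (y - x₀)
  have hfreq : ∃ᶠ t : ℂ in 𝓝 0, g (x₀ + t • (y - x₀)) ≠ 0 :=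
    frequently_ne_zero_of_isPreconnected hslice
      (isPreconnected_slice (convex_ball x₀ δ) x₀ (y - x₀))
      ⟨1, by simpa [dist_eq_norm] using hy, by simpa using hgy⟩ (by simpa using hδ)
  refine ⟨y - x₀, (hslice 0 (by simpa using hδ)).eventually_eq_zero_or_eventually_ne_zero
    |>.resolve_left fun hzero => hfreq (hzero.mono fun _ => not_not.2)⟩

lemma eventually_forall_sphere_ne_zero
    (hg : ∀ t ∈ sphere (0 : ℂ) ε, ContinuousAt g (x₀ + t • v))
    (hne : ∀ t ∈ sphere (0 : ℂ) ε, g (x₀ + t • v) ≠ 0) :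
    ∀ᶠ x in 𝓝 x₀, ∀ t ∈ sphere (0 : ℂ) ε, g (x + t • v) ≠ 0 := by
  refine (isCompact_sphere 0 ε).eventually_forall_of_forall_eventually fun t ht => ?_
  have hcont : ContinuousAt (fun p : E × ℂ => g (p.1 + p.2 • v)) (x₀, t) :=
    (hg t ht).comp_of_eq (by fun_prop) rfl
  exact hcont.eventually_ne (hne t ht)

lemma eq_circleAverage_div_mul_of_norm_le (hUo : IsOpen U) (hUc : Convex ℝ U)
    (hf : AnalyticOnNhd ℂ f U) (hg : AnalyticOnNhd ℂ g U) (hS : AccPt 0 (𝓟 S))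
    (hbound : ∀ x ∈ U, g x ∈ S → ‖f x‖ ≤ M * ‖g x‖) {x : E}
    (hdisc : ∀ t ∈ closedBall (0 : ℂ) |ε|, x + t • v ∈ U)
    (hne : ∀ t ∈ sphere (0 : ℂ) |ε|, g (x + t • v) ≠ 0) :
    f x = Real.circleAverage (fun t => f (x + t • v) / g (x + t • v)) 0 ε * g x := by
  have hopen := isOpen_slice hUo x v
  have hconn := isPreconnected_slice hUc x v
  have hf_slice := analyticOnNhd_slice hf x v
  have hg_slice := analyticOnNhd_slice hg x v
  have hg_slice_ne : ∃ t ∈ {t : ℂ | x + t • v ∈ U}, g (x + t • v) ≠ 0 := by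
    obtain ⟨t, ht⟩ := (NormedSpace.sphere_nonempty (x := (0 : ℂ))).2 (abs_nonneg ε)
    exact ⟨t, hdisc t (sphere_subset_closedBall ht), hne t ht⟩
  obtain ⟨q, hq, hfq⟩ := exists_analyticOnNhd_eqOn_mul_of_germDvdAt hopen hconn hg_slice
    hg_slice_ne fun t ht => germDvdAt_complex_of_norm_le (hf_slice t ht) (hg_slice t ht)
      (frequently_ne_zero_of_isPreconnected hg_slice hconn hg_slice_ne ht) hS
      (mem_of_superset (hopen.mem_nhds ht) fun s hs => hbound _ hs)
  simpa using eq_circleAverage_div_mul (hq.mono hdisc) (hfq.mono hdisc) hne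

lemma eventually_forall_closedBall_mem_ball (x₀ v : E) (hr : 0 < r) :
    ∀ᶠ ε : ℝ in 𝓝 0, ∀ᶠ x in 𝓝 x₀, ∀ t ∈ closedBall (0 : ℂ) |ε|, x + t • v ∈ ball x₀ r := by
  have hsmall : ∀ᶠ ε : ℝ in 𝓝 0, |ε| * ‖v‖ < r / 2 :=
    (Continuous.tendsto' (by fun_prop) 0 0 (by simp)).eventually_lt_const (half_pos hr)
  filter_upwards [hsmall] with ε hε
  filter_upwards [ball_mem_nhds x₀ (half_pos hr)] with x hx t ht
  rw [mem_closedBall_zero_iff] at ht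
  rw [mem_ball_iff_norm] at hx ⊢
  calc ‖x + t • v - x₀‖ = ‖(x - x₀) + t • v‖ := by rw [add_sub_right_comm]
    _ ≤ ‖x - x₀‖ + ‖t‖ * ‖v‖ := (norm_add_le _ _).trans_eq (by rw [norm_smul])
    _ ≤ ‖x - x₀‖ + |ε| * ‖v‖ := by gcongr
    _ < r := by linarith

theorem germDvdAt_of_norm_le (hf : AnalyticAt ℂ f x₀) (hg : AnalyticAt ℂ g x₀)
    (hgne : ∃ᶠ x in 𝓝 x₀, g x ≠ 0) (hS : AccPt 0 (𝓟 S))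
    (hbound : ∀ᶠ x in 𝓝 x₀, g x ∈ S → ‖f x‖ ≤ M * ‖g x‖) : GermDvdAt g f x₀ := by
  obtain ⟨r, hr, hball⟩ := eventually_nhds_iff_ball.1
    (hf.eventually_analyticAt.and (hg.eventually_analyticAt.and hbound))
  have hf_ball : AnalyticOnNhd ℂ f (ball x₀ r) := fun x hx => (hball x hx).1
  have hg_ball : AnalyticOnNhd ℂ g (ball x₀ r) := fun x hx => (hball x hx).2.1
  obtain ⟨v, hv⟩ := exists_direction_eventually_ne_zero hg hgne
  obtain ⟨ε, hne, hdisc, haverage⟩ := ((eventually_forall_sphere_of_nhdsNE hv).and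
    (nhdsWithin_le_nhds ((eventually_forall_closedBall_mem_ball x₀ v hr).and
      (eventually_analyticAt_circleAverage_div hf hg v)))).exists
  have hg_circle : ∀ t ∈ sphere (0 : ℂ) |ε|, ContinuousAt g (x₀ + t • v) := fun t ht =>
    (hg_ball _ (hdisc.self_of_nhds t (sphere_subset_closedBall ht))).continuousAt
  refine ⟨_, haverage hne, ?_⟩
  filter_upwards [hdisc, eventually_forall_sphere_ne_zero hg_circle hne] with x hdisc_x hne_x
  exact eq_circleAverage_div_mul_of_norm_le isOpen_ball (convex_ball x₀ r) hf_ball hg_ball hS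
    (fun y hy => (hball y hy).2.2) hdisc_x hne_x

end SeveralVariables

lemma polydisk_eq_ball (d : ℕ) {r : ℝ} (hr : 0 < r) : polydisk d r = ball 0 r := by
  ext x
  rw [mem_ball_zero_iff, pi_norm_lt_iff hr]
  rfl

lemma accPt_zero_ray (θ : ℝ) :
    AccPt (0 : ℂ) (𝓟 {w | w ≠ 0 ∧ w = (‖w‖ : ℂ) * Complex.exp (θ * Complex.I)}) := by
  have htendsto : Tendsto (fun t : ℝ => (t : ℂ) * Complex.exp (θ * Complex.I)) (𝓝[>] 0) (𝓝 0) :=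
    tendsto_nhdsWithin_of_tendsto_nhds <| Continuous.tendsto' (by fun_prop) _ _ (by simp)
  refine accPt_iff_frequently.2 (htendsto.frequently (Eventually.frequently ?_))
  filter_upwards [self_mem_nhdsWithin] with t ht
  have hnorm : ‖(t : ℂ) * Complex.exp (θ * Complex.I)‖ = t := by
    rw [norm_mul, Complex.norm_exp_ofReal_mul_I, mul_one, Complex.norm_of_nonneg (le_of_lt ht)]
  have hne : (t : ℂ) * Complex.exp (θ * Complex.I) ≠ 0 := norm_pos_iff.1 (hnorm.symm ▸ ht)
  exact ⟨hne, hne, by rw [hnorm]⟩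

theorem division_via_boundedness_on_arg_level_set_general
    {E : Type*} [NormedAddCommGroup E] [NormedSpace ℂ E] {U : Set E}
    (hUo : IsOpen U) (hUc : IsPreconnected U) {f g : E → ℂ}
    (hf : AnalyticOnNhd ℂ f U) (hg : AnalyticOnNhd ℂ g U) (hgne : ∃ x ∈ U, g x ≠ 0)
    {S : Set ℂ} (hS : AccPt 0 (𝓟 S)) {M : ℝ}
    (hbound : ∀ x ∈ U, g x ∈ S → ‖f x‖ ≤ M * ‖g x‖) :
    ∃ q : E → ℂ, AnalyticOnNhd ℂ q U ∧ EqOn f (q * g) U :=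
  exists_analyticOnNhd_eqOn_mul_of_germDvdAt hUo hUc hg hgne fun x hx =>
    germDvdAt_of_norm_le (hf x hx) (hg x hx)
      (frequently_ne_zero_of_isPreconnected hg hUc hgne hx) hS
      (mem_of_superset (hUo.mem_nhds hx) hbound)

/-- **Division of holomorphic germs via boundedness on an argument level set** (Lemma 2.2).
If `f, g` are holomorphic on the polydisk `D(0;r) ⊆ ℂ^d`, vanish at `0`, `g` is not
identically zero, and `|f| ≤ M·|g|` on the set where `g ≠ 0` and `arg g = θ`, then `g`
divides `f` as a germ at the origin. -/
theorem division_via_boundedness_on_arg_level_set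
    (d : ℕ) (hd : 1 ≤ d) (r : ℝ) (hr : 0 < r) (θ : ℝ)
    (f g : (Fin d → ℂ) → ℂ)
    (hf : AnalyticOnNhd ℂ f (polydisk d r))
    (hg : AnalyticOnNhd ℂ g (polydisk d r))
    (hf0 : f 0 = 0) (hg0 : g 0 = 0)
    (hgne : ∃ x ∈ polydisk d r, g x ≠ 0)
    (M : ℝ) (hM : 0 < M)
    (hbound : ∀ x ∈ polydisk d r, g x ≠ 0 →
      g x = (‖g x‖ : ℂ) * Complex.exp (θ * Complex.I) →
      ‖f x‖ ≤ M * ‖g x‖) :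
    ∃ ρ, 0 < ρ ∧ ρ ≤ r ∧ ∃ q : (Fin d → ℂ) → ℂ,
      AnalyticOnNhd ℂ q (polydisk d ρ) ∧
      ∀ x ∈ polydisk d ρ, f x = q x * g x := by
  obtain ⟨q, hq, hfq⟩ := division_via_boundedness_on_arg_level_set_general
    (polydisk_eq_ball d hr ▸ isOpen_ball)
    (polydisk_eq_ball d hr ▸ (convex_ball 0 r).isPreconnected) hf hg hgne
    (accPt_zero_ray θ) fun x hx hray => hbound x hx hray.1 hray.2
  exact ⟨r, hr, le_rfl, q, hq, hfq⟩
end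
end

section
/- Generalized Weierstrass division for formal power series (Lemma 2.5): Let d ≥ 1, let ℓ be an injective linear form, and let P ∈ ℂ[[x_1,…,x_d]] be nonzero with zero constant term; let a ∈ ℕ^d be the ℓ-minimal exponent of P. Then for every g ∈ ℂ[[x_1,…,x_d]] there exist unique formal power series q and r with g = q·P + r such that the coefficient of x^β in r vanishes for every β ∈ a + ℕ^d. -/
open Set Complex

noncomputable section

/-!
Let `w` be the linear form. If `q` has no terms of weight below `w γ`, then the terms at `γ` in `q`
and at `a` in `P` are the only ones contributing to the coefficient of `q * P` at `γ + a`, since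
every other exponent of `P` outweighs `a`. Hence the conditions
`coeff (γ + a) (q * P) = coeff (γ + a) g` on the quotient form a triangular system along the weight,
with the unit `coeff a P` on the diagonal. The weight is well-founded by Dickson's lemma, so the
system has exactly one solution, obtained by recursion.
-/

theorem existsUnique_isFixedPt_of_wellFounded {ι : Type*} {α : ι → Type*} [∀ i, Nonempty (α i)]
    {r : ι → ι → Prop} (hr : WellFounded r) (F : (∀ i, α i) → ∀ i, α i)
    (hF : ∀ f g i, (∀ j, r j i → f j = g j) → F f i = F g i) :
    ∃! f, Function.IsFixedPt F f := by
  classical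
  let extend (i : ι) (f : ∀ j, r j i → α j) (j : ι) : α j :=
    if h : r j i then f j h else Classical.arbitrary (α j)
  let f : ∀ i, α i := hr.fix fun i below => F (extend i below) i
  have hf : F f = f := by
    funext i
    rw [show f i = F (extend i fun j _ => f j) i from hr.fix_eq _ i]
    exact hF _ _ i fun j hj => by simp only [extend, dif_pos hj]
  refine ⟨f, hf, fun g hg => funext fun i => ?_⟩
  induction i using hr.induction with
  | _ i ih => rw [← hg, ← hf, hF g f i ih]

theorem wellFounded_invImage_lt_of_monotone {α β : Type*} [Preorder α] [WellQuasiOrderedLE α]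
    [Preorder β] {f : α → β} (hf : Monotone f) : WellFounded (InvImage (· < ·) f) := by
  have hwqo : WellQuasiOrdered fun x y => f x ≤ f y := fun u =>
    let ⟨m, n, hmn, hle⟩ := wellQuasiOrdered_le u
    ⟨m, n, hmn, hf hle⟩
  have : IsPreorder α fun x y => f x ≤ f y :=
    { refl := fun _ => le_rfl, trans := fun _ _ _ => le_trans }
  exact hwqo.wellFounded.mono fun _ _ hlt => lt_iff_le_not_ge.1 hlt

theorem finsuppWeight_mono {σ M : Type*} [AddCommMonoid M] [Preorder M] [IsOrderedAddMonoid M]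
    {w : σ → M} (hw : ∀ i, 0 ≤ w i) :
    Monotone (Finsupp.weight w : (σ →₀ ℕ) →+ M) := by
  intro u v huv
  obtain ⟨t, rfl⟩ := exists_add_of_le huv
  have ht : 0 ≤ Finsupp.weight w t := Finset.sum_nonneg fun i _ => nsmul_nonneg (hw i) (t i)
  simpa only [map_add] using le_add_of_nonneg_right ht

section Division

open MvPowerSeries

variable {σ R Γ : Type*} [AddCommMonoid Γ] [PartialOrder Γ] [IsOrderedCancelAddMonoid Γ]
  {w : (σ →₀ ℕ) →+ Γ} {a : σ →₀ ℕ}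

theorem coeff_add_mul_of_forall_coeff_eq_zero [Semiring R] {P q : MvPowerSeries σ R}
    {γ : σ →₀ ℕ} (hmin : ∀ β, coeff β P ≠ 0 → β ≠ a → w a < w β)
    (hq : ∀ δ, w δ < w γ → coeff δ q = 0) :
    coeff (γ + a) (q * P) = coeff γ q * coeff a P := by
  classical
  rw [coeff_mul]
  refine Finset.sum_eq_single_of_mem (γ, a) (Finset.HasAntidiagonal.mem_antidiagonal.2 rfl) ?_
  rintro ⟨δ, β⟩ hδβ hne
  have hsum : δ + β = γ + a := Finset.HasAntidiagonal.mem_antidiagonal.1 hδβ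
  by_cases hβ : coeff β P = 0
  · rw [hβ, mul_zero]
  have hβa : β ≠ a := by
    rintro rfl
    exact hne (Prod.ext (add_right_cancel hsum) rfl)
  have hδγ : w δ < w γ := by
    refine lt_of_add_lt_add_right (a := w a) ?_
    calc w δ + w a < w δ + w β := by gcongr; exact hmin β hβ hβa
      _ = w γ + w a := by rw [← map_add, hsum, map_add]
  rw [hq δ hδγ, zero_mul]

variable [Ring R] {P : MvPowerSeries σ R}

theorem existsUnique_forall_coeff_add_mul_eq (hw : WellFounded (InvImage (· < ·) w))
    (ha : IsUnit (coeff a P)) (hmin : ∀ β, coeff β P ≠ 0 → β ≠ a → w a < w β)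
    (c : (σ →₀ ℕ) → R) :
    ∃! q : MvPowerSeries σ R, ∀ γ, coeff (γ + a) (q * P) = c γ := by
  obtain ⟨u, hu⟩ := ha
  let correct (q : MvPowerSeries σ R) : MvPowerSeries σ R :=
    fun γ => coeff γ q + (c γ - coeff (γ + a) (q * P)) * ↑u⁻¹
  have correct_eq_iff (q) : correct q = q ↔ ∀ γ, coeff (γ + a) (q * P) = c γ := by
    refine funext_iff.trans (forall_congr' fun γ => ?_)
    rw [show correct q γ = q γ + _ from rfl, add_eq_left, Units.mul_left_eq_zero, sub_eq_zero,
      eq_comm]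
  have correct_congr (q q' : MvPowerSeries σ R) (γ) (hqq' : ∀ δ, w δ < w γ → q δ = q' δ) :
      correct q γ = correct q' γ := by
    have hlead : coeff (γ + a) ((q - q') * P) = coeff γ (q - q') * u := by
      rw [hu]
      exact coeff_add_mul_of_forall_coeff_eq_zero hmin fun δ hδ => sub_eq_zero.2 (hqq' δ hδ)
    rw [← sub_eq_zero]
    calc correct q γ - correct q' γ
        = coeff γ (q - q') - coeff (γ + a) ((q - q') * P) * ↑u⁻¹ := by
          simp only [correct, sub_mul, map_sub]
          abel
      _ = 0 := by rw [hlead, Units.mul_inv_cancel_right, sub_self]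
  exact (existsUnique_congr correct_eq_iff).1
    (existsUnique_isFixedPt_of_wellFounded hw correct correct_congr)

theorem generalized_weierstrass_division_formal_general
    (hw : WellFounded (InvImage (· < ·) w)) (ha : IsUnit (coeff a P))
    (hmin : ∀ β, coeff β P ≠ 0 → β ≠ a → w a < w β) (g : MvPowerSeries σ R) :
    ∃! qr : MvPowerSeries σ R × MvPowerSeries σ R,
      g = qr.1 * P + qr.2 ∧ ∀ β, a ≤ β → coeff β qr.2 = 0 := by
  obtain ⟨q, hq, hq_unique⟩ :=
    existsUnique_forall_coeff_add_mul_eq hw ha hmin fun γ => coeff (γ + a) g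
  refine ⟨(q, g - q * P), ⟨(add_sub_cancel _ _).symm, fun β hβ => ?_⟩, ?_⟩
  · obtain ⟨γ, rfl⟩ := exists_add_of_le hβ
    rw [add_comm a γ, map_sub, hq, sub_self]
  · rintro ⟨q', r⟩ ⟨rfl, hr⟩
    obtain rfl : q' = q := hq_unique q' fun γ => by
      rw [map_add, hr _ le_add_self, add_zero]
    rw [add_sub_cancel_left]

end Division

/-- **Generalized Weierstrass division for formal power series** (Lemma 2.5).
Let `ℓ` be an injective linear form with positive coefficients, `P` a nonzero formal power
series with zero constant term and `ℓ`-minimal exponent `a`. Then every `g` can be written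
uniquely as `g = q·P + r` where the coefficients of `r` vanish on `a + ℕ^d`. -/
theorem generalized_weierstrass_division_formal
    (d : ℕ) (hd : 1 ≤ d) (ℓ : Fin d → ℝ) (hℓpos : ∀ j, 0 < ℓ j)
    (hℓinj : Function.Injective fun β : Fin d →₀ ℕ => ∑ j, ℓ j * (β j : ℝ))
    (P : MvPowerSeries (Fin d) ℂ) (hP : P ≠ 0)
    (hP0 : MvPowerSeries.constantCoeff P = 0)
    (a : Fin d →₀ ℕ)
    (ha : MvPowerSeries.coeff a P ≠ 0)
    (hamin : ∀ β : Fin d →₀ ℕ, MvPowerSeries.coeff β P ≠ 0 → β ≠ a →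
      ∑ j, ℓ j * (a j : ℝ) < ∑ j, ℓ j * (β j : ℝ))
    (g : MvPowerSeries (Fin d) ℂ) :
    ∃! qr : MvPowerSeries (Fin d) ℂ × MvPowerSeries (Fin d) ℂ,
      g = qr.1 * P + qr.2 ∧
      ∀ β : Fin d →₀ ℕ, a ≤ β → MvPowerSeries.coeff β qr.2 = 0 := by
  refine generalized_weierstrass_division_formal_general (w := Finsupp.weight ℓ)
    (wellFounded_invImage_lt_of_monotone (finsuppWeight_mono fun j => (hℓpos j).le)) ha.isUnit ?_ g
  simpa only [Finsupp.weight_eq_sum, nsmul_eq_mul, mul_comm] using hamin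
end
end

section
/- Weierstrass division for bounded holomorphic functions (Lemma 2.7): Let d ≥ 1, let ℓ be an injective linear form with coefficients ℓ_1,…,ℓ_d > 0, and let P be holomorphic in a neighborhood of 0 ∈ ℂ^d, not identically zero, with P(0) = 0; let a ∈ ℕ^d be the ℓ-minimal exponent of the Taylor series of P at 0. For s > 0 set D_s = {x ∈ ℂ^d : |x_j| < s^{ℓ_j} for all j}. Then there exists s_0 > 0 such that for every 0 < s ≤ s_0 and every bounded holomorphic g on D_s there exist unique bounded holomorphic functions q and r on D_s with g = q·P + r and ∂^β r(0) = 0 for every β ∈ a + ℕ^d; moreover there is a constant C = C(s) with sup_{D_s}|q| ≤ C·sup_{D_s}|g| and sup_{D_s}|r| ≤ C·sup_{D_s}|g|. -/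
open Set Complex

noncomputable section

/-- The weighted polydisk `D_s = {x : |x_j| < s^{ℓ_j}}`. -/
def weightedPolydisk (d : ℕ) (ℓ : Fin d → ℝ) (s : ℝ) : Set (Fin d → ℂ) :=
  {x | ∀ j, ‖x j‖ < s ^ (ℓ j)}

/-- Partial derivative in the `j`-th coordinate direction. -/
def pderivCoord {d : ℕ} (j : Fin d) (f : (Fin d → ℂ) → ℂ) : (Fin d → ℂ) → ℂ :=
  fun x => fderiv ℂ f x (Pi.single j 1)

/-- Mixed partial derivative `∂^β = ∂^{β_1}_{x_1} ⋯ ∂^{β_d}_{x_d}`. -/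
def mixedPartial {d : ℕ} (β : Fin d → ℕ) (f : (Fin d → ℂ) → ℂ) : (Fin d → ℂ) → ℂ :=
  (List.finRange d).foldr (fun j g => (pderivCoord j)^[β j] g) f

open Filter Topology BoundedContinuousFunction

/-!
The bounded holomorphic functions on a polydisc `D` of polyradius `ρ` form a Banach algebra `H`.
Dividing out the coordinates one at a time (with the Schwarz lemma) shows that the map `S` taking
`∑ c β x ^ β` to `∑ c (β + a) x ^ β` is a bounded operator on `H` of norm at most `(2 / ρ) ^ a`. A
function is an admissible remainder exactly when `S` annihilates it, so `q` and `r = g - q P` divide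
`g` if and only if `S (q P) = S g`. Writing `P = k x ^ a + N`, one has `S (q P) = k q + S (q N)`,
and this is an invertible function of `q` as soon as `‖S‖ ‖N‖ < |k|`. For `ρ j = s ^ ℓ j` the norm
of `S` is at most `2 ^ |a| s ^ (-ℓ(a))`, while every monomial of `N` has `ℓ`-weight greater than
`ℓ(a)`, so the condition holds for small `s`.
-/

/-! ### Multi-index powers and polydiscs -/

theorem hasSum_add_single_iff {ι M : Type*} [DecidableEq ι] [AddCommMonoid M]
    [TopologicalSpace M] {F : (ι → ℕ) → M} (j : ι) {s : M} (hF : ∀ β, β j = 0 → F β = 0) :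
    HasSum (fun β : ι → ℕ => F (β + Pi.single j 1)) s ↔ HasSum F s := by
  refine (add_left_injective (Pi.single j 1 : ι → ℕ)).hasSum_iff fun β hβ => hF β ?_
  by_contra hne
  have hle : Pi.single j 1 ≤ β := by
    intro i
    obtain rfl | hij := eq_or_ne i j
    · simpa using Nat.one_le_iff_ne_zero.2 hne
    · simp [hij]
  exact hβ ⟨β - Pi.single j 1, tsub_add_cancel_of_le hle⟩

section MultiPow

variable {ι R : Type*} [Fintype ι]

/-- The multi-index power `x ^ β = ∏ j, x j ^ β j`. -/
def multiPow [CommMonoid R] (x : ι → R) (β : ι → ℕ) : R :=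
  ∏ j, x j ^ β j

theorem multiPow_zero_right [CommMonoid R] (x : ι → R) : multiPow x 0 = 1 := by
  simp [multiPow]

theorem multiPow_add [CommMonoid R] (x : ι → R) (β γ : ι → ℕ) :
    multiPow x (β + γ) = multiPow x β * multiPow x γ := by
  simp only [multiPow, Pi.add_apply, pow_add, Finset.prod_mul_distrib]

theorem mul_multiPow [CommMonoid R] (x y : ι → R) (β : ι → ℕ) :
    multiPow (fun j => x j * y j) β = multiPow x β * multiPow y β := by
  simp only [multiPow, mul_pow, Finset.prod_mul_distrib]

theorem multiPow_div [DivisionCommMonoid R] (x y : ι → R) (β : ι → ℕ) :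
    multiPow (fun j => x j / y j) β = multiPow x β / multiPow y β := by
  simp only [multiPow, div_pow, Finset.prod_div_distrib]

theorem multiPow_const [CommMonoid R] (t : R) (β : ι → ℕ) :
    multiPow (fun _ => t) β = t ^ ∑ j, β j :=
  Finset.prod_pow_eq_pow_sum _ _ _

theorem multiPow_single [CommMonoid R] [DecidableEq ι] (x : ι → R) (j : ι) (n : ℕ) :
    multiPow x (Pi.single j n) = x j ^ n := by
  rw [multiPow, Finset.prod_eq_single j (fun i _ hi => by simp [hi]) (by simp), Pi.single_eq_same]

theorem multiPow_update [CommMonoid R] [DecidableEq ι] (x : ι → R) (j : ι) (t : R) (β : ι → ℕ) :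
    multiPow (Function.update x j t) β = t ^ β j * multiPow x (Function.update β j 0) := by
  simp only [multiPow, ← Finset.mul_prod_erase Finset.univ _ (Finset.mem_univ j),
    Function.update_self, pow_zero, one_mul]
  congr 1
  refine Finset.prod_congr rfl fun i hi => ?_
  simp only [Function.update_of_ne (Finset.ne_of_mem_erase hi)]

theorem multiPow_eq_zero [CommMonoidWithZero R] {x : ι → R} {β : ι → ℕ} {j : ι} (hx : x j = 0)
    (hβ : β j ≠ 0) : multiPow x β = 0 :=
  Finset.prod_eq_zero (Finset.mem_univ j) (by rw [hx, zero_pow hβ])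

theorem multiPow_pos {x : ι → ℝ} (hx : ∀ j, 0 < x j) (β : ι → ℕ) : 0 < multiPow x β :=
  Finset.prod_pos fun j _ => pow_pos (hx j) _

theorem multiPow_nonneg {x : ι → ℝ} (hx : ∀ j, 0 ≤ x j) (β : ι → ℕ) : 0 ≤ multiPow x β :=
  Finset.prod_nonneg fun j _ => pow_nonneg (hx j) _

theorem multiPow_le_multiPow {x y : ι → ℝ} (hx : ∀ j, 0 ≤ x j) (hxy : ∀ j, x j ≤ y j)
    (β : ι → ℕ) : multiPow x β ≤ multiPow y β :=
  Finset.prod_le_prod (fun j _ => pow_nonneg (hx j) _)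
    fun j _ => pow_le_pow_left₀ (hx j) (hxy j) _

theorem norm_multiPow [NormedField R] (x : ι → R) (β : ι → ℕ) :
    ‖multiPow x β‖ = multiPow (fun j => ‖x j‖) β := by
  simp only [multiPow, norm_prod, norm_pow]

theorem multiPow_cons [CommMonoid R] {d : ℕ} (t : R) (x : Fin d → R) (n : ℕ) (β : Fin d → ℕ) :
    multiPow (Fin.cons t x : Fin (d + 1) → R) (Fin.cons n β : Fin (d + 1) → ℕ) =
      t ^ n * multiPow x β := by
  simp only [multiPow, Fin.prod_univ_succ, Fin.cons_zero, Fin.cons_succ]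

theorem summable_multiPow {d : ℕ} {t : Fin d → ℝ} (ht₀ : ∀ j, 0 ≤ t j) (ht₁ : ∀ j, t j < 1) :
    Summable (multiPow t) := by
  induction d with
  | zero => exact (hasSum_fintype _).summable
  | succ d ih =>
    rw [← (Fin.consEquiv fun _ : Fin (d + 1) => ℕ).summable_iff]
    refine ((summable_geometric_of_lt_one (ht₀ 0) (ht₁ 0)).mul_of_nonneg
      (ih (fun j => ht₀ j.succ) (fun j => ht₁ j.succ)) (fun n => pow_nonneg (ht₀ 0) n)
      (multiPow_nonneg fun j => ht₀ j.succ)).congr fun ⟨n, β⟩ => ?_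
    exact (multiPow_cons _ _ n β).symm.trans (by rw [← Fin.cons_self_tail t]; rfl)

end MultiPow

section Polydisc

variable {ι : Type*} {ρ : ι → ℝ} {x : ι → ℂ}

/-- The open polydisc centred at `0` with polyradius `ρ`; the sets `polydisk` and
`weightedPolydisk` are definitionally polydiscs. -/
def polydisc (ρ : ι → ℝ) : Set (ι → ℂ) :=
  {x | ∀ j, ‖x j‖ < ρ j}

theorem isOpen_polydisc [Finite ι] (ρ : ι → ℝ) : IsOpen (polydisc ρ) := by
  simp only [polydisc, ofPred_forall]
  exact isOpen_iInter_of_finite fun j => isOpen_lt (by fun_prop) continuous_const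

theorem zero_mem_polydisc (hρ : ∀ j, 0 < ρ j) : (0 : ι → ℂ) ∈ polydisc ρ := by
  simpa [polydisc] using hρ

theorem radius_pos_of_mem_polydisc (hx : x ∈ polydisc ρ) (j : ι) : 0 < ρ j :=
  (norm_nonneg _).trans_lt (hx j)

theorem polydisc_mono {σ : ι → ℝ} (h : ∀ j, σ j ≤ ρ j) : polydisc σ ⊆ polydisc ρ :=
  fun _ hx j => (hx j).trans_le (h j)

theorem update_mem_polydisc [DecidableEq ι] (hx : x ∈ polydisc ρ) {j : ι} {t : ℂ}
    (ht : ‖t‖ < ρ j) : Function.update x j t ∈ polydisc ρ := by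
  intro i
  obtain rfl | hij := eq_or_ne i j
  · simpa using ht
  · simpa [hij] using hx i

theorem cons_mem_polydisc {d : ℕ} {ρ : Fin (d + 1) → ℝ} {t : ℂ} {y : Fin d → ℂ}
    (ht : ‖t‖ < ρ 0) (hy : y ∈ polydisc (Fin.tail ρ)) :
    (Fin.cons t y : Fin (d + 1) → ℂ) ∈ polydisc ρ :=
  Fin.cases (by simpa using ht) fun i => by simpa [Fin.tail] using hy i

theorem ofReal_mem_polydisc {σ : ι → ℝ} (hσ₀ : ∀ j, 0 ≤ σ j) (hσ : ∀ j, σ j < ρ j) :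
    (fun j => (σ j : ℂ)) ∈ polydisc ρ := by
  intro j
  rw [Complex.norm_real, Real.norm_of_nonneg (hσ₀ j)]
  exact hσ j

theorem exists_radius_between_of_mem_polydisc (hx : x ∈ polydisc ρ) :
    ∃ σ : ι → ℝ, x ∈ polydisc σ ∧ ∀ j, σ j < ρ j := by
  choose σ hxσ hσρ using fun j => exists_between (hx j)
  exact ⟨σ, hxσ, hσρ⟩

theorem exists_norm_le_on_polydisc {σ : ι → ℝ} {f : (ι → ℂ) → ℂ}
    (hσ : ∀ j, σ j < ρ j) (hf : ContinuousOn f (polydisc ρ)) :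
    ∃ M, ∀ x ∈ polydisc σ, ‖f x‖ ≤ M := by
  have hcompact : IsCompact (univ.pi fun j => Metric.closedBall (0 : ℂ) (σ j)) :=
    isCompact_univ_pi fun j => isCompact_closedBall _ _
  obtain ⟨M, hM⟩ := hcompact.exists_bound_of_continuousOn
    (hf.mono fun x hx j => (mem_closedBall_zero_iff.1 (hx j trivial)).trans_lt (hσ j))
  exact ⟨M, fun x hx => hM x fun j _ => mem_closedBall_zero_iff.2 (hx j).le⟩

end Polydisc

/-! ### Monomial series -/

section MonomialSeries

variable {ι : Type*} [Fintype ι] {ρ : ι → ℝ} {f g : (ι → ℂ) → ℂ} {c e : (ι → ℕ) → ℂ}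

/-- `f` is the sum of the power series `∑ c β * x ^ β` on the polydisc of polyradius `ρ`. As
convergence is unconditional, no order on the multi-indices is involved. -/
def HasMonomialSeriesOn (f : (ι → ℂ) → ℂ) (c : (ι → ℕ) → ℂ) (ρ : ι → ℝ) : Prop :=
  ∀ x ∈ polydisc ρ, HasSum (fun β => c β * multiPow x β) (f x)

namespace HasMonomialSeriesOn

theorem congr (h : HasMonomialSeriesOn f c ρ) (hfg : EqOn f g (polydisc ρ)) :
    HasMonomialSeriesOn g c ρ :=
  fun x hx => hfg hx ▸ h x hx

theorem mono (h : HasMonomialSeriesOn f c ρ) {σ : ι → ℝ} (hσ : ∀ j, σ j ≤ ρ j) :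
    HasMonomialSeriesOn f c σ :=
  fun x hx => h x (polydisc_mono hσ hx)

theorem add (hf : HasMonomialSeriesOn f c ρ) (hg : HasMonomialSeriesOn g e ρ) :
    HasMonomialSeriesOn (f + g) (c + e) ρ := fun x hx => by
  simpa only [Pi.add_apply, add_mul] using (hf x hx).add (hg x hx)

theorem const_smul (hf : HasMonomialSeriesOn f c ρ) (k : ℂ) :
    HasMonomialSeriesOn (k • f) (k • c) ρ := fun x hx => by
  simpa only [Pi.smul_apply, smul_eq_mul, mul_assoc] using (hf x hx).mul_left k

theorem mul_multiPow (hf : HasMonomialSeriesOn f c ρ) (a : ι → ℕ) :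
    HasMonomialSeriesOn (fun x => f x * multiPow x a) (Function.extend (· + a) c 0) ρ := by
  intro x hx
  rw [← (add_left_injective a).hasSum_iff]
  · refine ((hf x hx).mul_right (multiPow x a)).congr_fun fun β => ?_
    simp only [Function.comp_apply, (add_left_injective a).extend_apply, multiPow_add, mul_assoc]
  · intro β hβ
    rw [Function.extend_apply' _ _ _ hβ, Pi.zero_apply, zero_mul]

theorem apply_zero (h : HasMonomialSeriesOn f c ρ) (hρ : ∀ j, 0 < ρ j) : f 0 = c 0 := by
  refine (h 0 (zero_mem_polydisc hρ)).unique ?_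
  have hvanish : ∀ β ≠ 0, c β * multiPow 0 β = 0 := fun β hβ => by
    obtain ⟨j, hj⟩ := Function.ne_iff.1 hβ
    rw [multiPow_eq_zero (j := j) rfl hj, mul_zero]
  simpa only [multiPow_zero_right, mul_one] using hasSum_single 0 hvanish

end HasMonomialSeriesOn

theorem norm_mul_multiPow_le {k : ℂ} {β : ι → ℕ} {M : ℝ} (hk : ‖k‖ * multiPow ρ β ≤ M)
    {x : ι → ℂ} (hx : x ∈ polydisc ρ) :
    ‖k * multiPow x β‖ ≤ M * multiPow (fun j => ‖x j‖ / ρ j) β := by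
  have hρβ : 0 < multiPow ρ β := multiPow_pos (radius_pos_of_mem_polydisc hx) β
  calc ‖k * multiPow x β‖
      = ‖k‖ * multiPow ρ β * multiPow (fun j => ‖x j‖ / ρ j) β := by
        rw [norm_mul, norm_multiPow, multiPow_div]
        field_simp
    _ ≤ M * multiPow (fun j => ‖x j‖ / ρ j) β := by
        gcongr
        exact multiPow_nonneg (fun j => div_nonneg (norm_nonneg _)
          (radius_pos_of_mem_polydisc hx j).le) β

theorem summable_multiPow_norm_div {d : ℕ} {ρ : Fin d → ℝ} {x : Fin d → ℂ}
    (hx : x ∈ polydisc ρ) : Summable (multiPow fun j => ‖x j‖ / ρ j) :=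
  summable_multiPow (fun j => div_nonneg (norm_nonneg _) (radius_pos_of_mem_polydisc hx j).le)
    fun j => (div_lt_one (radius_pos_of_mem_polydisc hx j)).2 (hx j)

theorem summable_mul_multiPow {d : ℕ} {ρ : Fin d → ℝ} {c : (Fin d → ℕ) → ℂ} {M : ℝ}
    (hc : ∀ β, ‖c β‖ * multiPow ρ β ≤ M) {x : Fin d → ℂ} (hx : x ∈ polydisc ρ) :
    Summable fun β => c β * multiPow x β :=
  ((summable_multiPow_norm_div hx).mul_left M).of_norm_bounded
    fun β => norm_mul_multiPow_le (hc β) hx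

theorem hasMonomialSeriesOn_of_tendsto {α : Type*} {l : Filter α} [l.NeBot] {d : ℕ}
    {ρ : Fin d → ℝ} {u : α → (Fin d → ℂ) → ℂ} {b : α → (Fin d → ℕ) → ℂ} {f : (Fin d → ℂ) → ℂ}
    {c : (Fin d → ℕ) → ℂ} {M : ℝ} (hu : ∀ n, HasMonomialSeriesOn (u n) (b n) ρ)
    (hM : ∀ n β, ‖b n β‖ * multiPow ρ β ≤ M) (hb : ∀ β, Tendsto (fun n => b n β) l (𝓝 (c β)))
    (hf : ∀ x ∈ polydisc ρ, Tendsto (fun n => u n x) l (𝓝 (f x))) :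
    HasMonomialSeriesOn f c ρ := by
  intro x hx
  have hcM : ∀ β, ‖c β‖ * multiPow ρ β ≤ M := fun β =>
    le_of_tendsto ((hb β).norm.mul_const _) (Eventually.of_forall fun n => hM n β)
  have hlim : Tendsto (fun n => u n x) l (𝓝 (∑' β, c β * multiPow x β)) := by
    simp only [← (hu _ x hx).tsum_eq]
    exact tendsto_tsum_of_dominated_convergence ((summable_multiPow_norm_div hx).mul_left M)
      (fun β => (hb β).mul_const _)
      (Eventually.of_forall fun n β => norm_mul_multiPow_le (hM n β) hx)
  rw [tendsto_nhds_unique (hf x hx) hlim]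
  exact (summable_mul_multiPow hcM hx).hasSum

/-! ### Analyticity of monomial series -/

theorem exists_multilinearMap_diagonal_eq_multiPow {n : ℕ} {β : ι → ℕ} (hβ : ∑ j, β j = n) :
    ∃ m : ContinuousMultilinearMap ℂ (fun _ : Fin n => ι → ℂ) ℂ,
      ‖m‖ ≤ 1 ∧ ∀ x, m (fun _ => x) = multiPow x β := by
  have e : Fin n ≃ Σ j : ι, Fin (β j) := (Fintype.equivFinOfCardEq (by simp [hβ])).symm
  refine ⟨(ContinuousMultilinearMap.mkPiAlgebra ℂ (Fin n) ℂ).compContinuousLinearMap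
    fun i => ContinuousLinearMap.proj (e i).1, ?_, fun x => ?_⟩
  · refine ContinuousMultilinearMap.opNorm_le_bound zero_le_one fun v => ?_
    simp only [ContinuousMultilinearMap.compContinuousLinearMap_apply,
      ContinuousMultilinearMap.mkPiAlgebra_apply, ContinuousLinearMap.proj_apply, norm_prod,
      one_mul]
    exact Finset.prod_le_prod (fun _ _ => norm_nonneg _) fun i _ => norm_le_pi_norm (v i) _
  · simp only [ContinuousMultilinearMap.compContinuousLinearMap_apply,
      ContinuousMultilinearMap.mkPiAlgebra_apply, ContinuousLinearMap.proj_apply]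
    rw [e.prod_comp fun s => x s.1, Fintype.prod_sigma]
    simp only [Finset.prod_const, Finset.card_univ, Fintype.card_fin, multiPow]

theorem exists_multilinearMap_diagonal_eq_sum [DecidableEq ι] (c : (ι → ℕ) → ℂ) (n : ℕ) :
    ∃ p : ContinuousMultilinearMap ℂ (fun _ : Fin n => ι → ℂ) ℂ,
      ‖p‖ ≤ ∑ β ∈ Finset.piAntidiag Finset.univ n, ‖c β‖ ∧
      ∀ x, p (fun _ => x) = ∑ β ∈ Finset.piAntidiag Finset.univ n, c β * multiPow x β := by
  choose! m hm_norm hm using fun (β : ι → ℕ) (hβ : β ∈ Finset.piAntidiag Finset.univ n) =>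
    exists_multilinearMap_diagonal_eq_multiPow (by simpa using hβ : ∑ j, β j = n)
  refine ⟨∑ β ∈ Finset.piAntidiag Finset.univ n, c β • m β, ?_, fun x => ?_⟩
  · refine norm_sum_le_of_le _ fun β hβ => ?_
    rw [norm_smul]
    exact mul_le_of_le_one_right (norm_nonneg _) (hm_norm β hβ)
  · rw [_root_.sum_apply]
    exact Finset.sum_congr rfl fun β hβ => by
      rw [_root_.smul_apply, hm β hβ, smul_eq_mul]

theorem hasSum_sum_piAntidiag [DecidableEq ι] {F : (ι → ℕ) → ℂ} {s : ℂ} (h : HasSum F s) :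
    HasSum (fun n => ∑ β ∈ Finset.piAntidiag Finset.univ n, F β) s := by
  rw [← (Equiv.sigmaFiberEquiv fun β : ι → ℕ => ∑ j, β j).hasSum_iff] at h
  refine h.sigma fun n => ?_
  let e : {β // β ∈ Finset.piAntidiag (Finset.univ : Finset ι) n} ≃ {β : ι → ℕ // ∑ j, β j = n} :=
    Equiv.subtypeEquivRight fun β => by simp
  exact e.hasSum_iff.1 (Finset.hasSum (Finset.piAntidiag Finset.univ n) F)

theorem polydisc_one_eq_eball : polydisc (fun _ : ι => (1 : ℝ)) = Metric.eball 0 1 := by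
  ext x
  rw [← ENNReal.ofReal_one, Metric.eball_ofReal, mem_ball_zero_iff, pi_norm_lt_iff one_pos]
  rfl

namespace HasMonomialSeriesOn

theorem analyticOnNhd_polydisc_one (h : HasMonomialSeriesOn f c fun _ => 1) :
    AnalyticOnNhd ℂ f (polydisc fun _ => 1) := by
  classical
  choose p hp_norm hp using exists_multilinearMap_diagonal_eq_sum c
  have hseries : HasFPowerSeriesOnBall f p 0 1 := by
    refine ⟨ENNReal.le_of_forall_nnreal_lt fun r hr => ?_, one_pos, fun {y} hy => ?_⟩
    · have hsummable := (h _ (ofReal_mem_polydisc (σ := fun _ : ι => (r : ℝ)) (fun _ => r.2)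
        fun _ => by exact_mod_cast hr)).summable.norm
      refine FormalMultilinearSeries.le_radius_of_bound p
        (∑' β, ‖c β * multiPow (fun _ : ι => ((r : ℝ) : ℂ)) β‖) fun n => ?_
      calc ‖p n‖ * (r : ℝ) ^ n
          ≤ (∑ β ∈ Finset.piAntidiag Finset.univ n, ‖c β‖) * (r : ℝ) ^ n := by
            gcongr
            exact hp_norm n
        _ = ∑ β ∈ Finset.piAntidiag Finset.univ n,
              ‖c β * multiPow (fun _ : ι => ((r : ℝ) : ℂ)) β‖ := by
            rw [Finset.sum_mul]
            refine Finset.sum_congr rfl fun β hβ => ?_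
            have hdeg : ∑ j, β j = n := by simpa using hβ
            simp [multiPow_const, hdeg]
        _ ≤ _ := hsummable.sum_le_tsum _ fun _ _ => norm_nonneg _
    · rw [← polydisc_one_eq_eball] at hy
      simpa only [zero_add, hp] using hasSum_sum_piAntidiag (h y hy)
  exact polydisc_one_eq_eball (ι := ι) ▸ hseries.analyticOnNhd

theorem analyticOnNhd (h : HasMonomialSeriesOn f c ρ) : AnalyticOnNhd ℂ f (polydisc ρ) := by
  intro x hx
  have hρ := radius_pos_of_mem_polydisc hx
  have hρ' : ∀ j, (ρ j : ℂ) ≠ 0 := fun j => ofReal_ne_zero.2 (hρ j).ne'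
  have hscaled : HasMonomialSeriesOn (fun y => f fun j => ρ j * y j)
      (fun β => c β * multiPow (fun j => (ρ j : ℂ)) β) fun _ => 1 := by
    intro y hy
    have hmem : (fun j => (ρ j : ℂ) * y j) ∈ polydisc ρ := fun j => by
      simpa [abs_of_pos (hρ j)] using mul_lt_of_lt_one_right (hρ j) (hy j)
    simpa only [_root_.mul_multiPow, mul_assoc] using h _ hmem
  have hmem : (fun j => (ρ j : ℂ)⁻¹ * x j) ∈ polydisc fun _ : ι => (1 : ℝ) := fun j => by
    simpa [abs_of_pos (hρ j), inv_mul_lt_iff₀ (hρ j)] using hx j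
  have hinner : AnalyticAt ℂ (fun (x : ι → ℂ) j => (ρ j : ℂ)⁻¹ * x j) x :=
    analyticAt_pi_iff.2 fun j =>
      analyticAt_const.mul ((ContinuousLinearMap.proj (R := ℂ) (φ := fun _ => ℂ) j).analyticAt x)
  simpa only [Function.comp_def, mul_inv_cancel_left₀ (hρ' _)] using
    (hscaled.analyticOnNhd_polydisc_one _ hmem).comp_of_eq hinner rfl

end HasMonomialSeriesOn

end MonomialSeries

/-! ### Partial derivatives and Taylor coefficients -/

section PartialDerivatives

variable {d : ℕ} {f : (Fin d → ℂ) → ℂ} {U : Set (Fin d → ℂ)}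

theorem analyticOnNhd_pderivCoord (hf : AnalyticOnNhd ℂ f U) (j : Fin d) :
    AnalyticOnNhd ℂ (pderivCoord j f) U :=
  (ContinuousLinearMap.apply ℂ ℂ (Pi.single j 1 : Fin d → ℂ)).comp_analyticOnNhd hf.fderiv

theorem analyticOnNhd_iterate_pderivCoord (hf : AnalyticOnNhd ℂ f U) (j : Fin d) (n : ℕ) :
    AnalyticOnNhd ℂ ((pderivCoord j)^[n] f) U := by
  induction n with
  | zero => exact hf
  | succ n ih =>
    rw [Function.iterate_succ_apply']
    exact analyticOnNhd_pderivCoord ih j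

theorem hasDerivAt_comp_update {x : Fin d → ℂ} {j : Fin d} {t : ℂ}
    (hf : DifferentiableAt ℂ f (Function.update x j t)) :
    HasDerivAt (fun u => f (Function.update x j u)) (pderivCoord j f (Function.update x j t)) t :=
  hf.hasFDerivAt.comp_hasDerivAt t (hasDerivAt_update x j t)

variable {ρ : Fin d → ℝ}

theorem differentiableOn_comp_update (hf : AnalyticOnNhd ℂ f (polydisc ρ)) {x : Fin d → ℂ}
    (hx : x ∈ polydisc ρ) (j : Fin d) :
    DifferentiableOn ℂ (fun t => f (Function.update x j t)) (Metric.ball 0 (ρ j)) :=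
  fun _ ht => (hasDerivAt_comp_update (hf _ (update_mem_polydisc hx
    (mem_ball_zero_iff.1 ht))).differentiableAt).differentiableAt.differentiableWithinAt

theorem iteratedDeriv_comp_update (hf : AnalyticOnNhd ℂ f (polydisc ρ)) {x : Fin d → ℂ}
    (hx : x ∈ polydisc ρ) (j : Fin d) (n : ℕ) :
    EqOn (iteratedDeriv n fun t => f (Function.update x j t))
      (fun t => (pderivCoord j)^[n] f (Function.update x j t)) (Metric.ball 0 (ρ j)) := by
  induction n with
  | zero => exact fun _ _ => by simp
  | succ n ih =>
    intro t ht
    have hmem := update_mem_polydisc hx (mem_ball_zero_iff.1 ht)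
    rw [iteratedDeriv_succ, (ih.eventuallyEq_of_mem (Metric.isOpen_ball.mem_nhds ht)).deriv_eq,
      (hasDerivAt_comp_update
        (analyticOnNhd_iterate_pderivCoord hf j n _ hmem).differentiableAt).deriv,
      Function.iterate_succ_apply']

theorem deriv_mul_multiPow_update (k : ℂ) (x : Fin d → ℂ) (j : Fin d) (β : Fin d → ℕ) :
    deriv (fun t => k * multiPow (Function.update x j t) β) (x j) =
      k * (β j * x j ^ (β j - 1) * multiPow x (Function.update β j 0)) := by
  simp only [multiPow_update, deriv_const_mul_field, deriv_mul_const_field, deriv_pow_field]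

/-- The multi-index factorial `β! = ∏ j, (β j)!`. -/
def multiFactorial {ι : Type*} [Fintype ι] (β : ι → ℕ) : ℕ :=
  ∏ j, (β j).factorial

theorem multiFactorial_ne_zero {ι : Type*} [Fintype ι] (β : ι → ℕ) : multiFactorial β ≠ 0 :=
  Finset.prod_ne_zero_iff.2 fun j _ => (β j).factorial_ne_zero

theorem multiFactorial_add_single {ι : Type*} [Fintype ι] [DecidableEq ι] (β : ι → ℕ) (j : ι) :
    multiFactorial (β + Pi.single j 1) = (β j + 1) * multiFactorial β := by
  simp only [multiFactorial, ← Finset.mul_prod_erase Finset.univ _ (Finset.mem_univ j),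
    Pi.add_apply, Pi.single_eq_same, Nat.factorial_succ, mul_assoc]
  congr 2
  refine Finset.prod_congr rfl fun i hi => ?_
  rw [Pi.single_eq_of_ne (Finset.ne_of_mem_erase hi), add_zero]

/-- The Taylor coefficient `∂^β f(0) / β!` of `f` at the origin. -/
def taylorCoeff (f : (Fin d → ℂ) → ℂ) (β : Fin d → ℕ) : ℂ :=
  mixedPartial β f 0 / multiFactorial β

theorem taylorCoeff_eq_zero_iff {f : (Fin d → ℂ) → ℂ} {β : Fin d → ℕ} :
    taylorCoeff f β = 0 ↔ mixedPartial β f 0 = 0 := by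
  simp [taylorCoeff, multiFactorial_ne_zero]

namespace HasMonomialSeriesOn

variable {c : (Fin d → ℕ) → ℂ}

theorem hasSum_deriv (h : HasMonomialSeriesOn f c ρ) {x : Fin d → ℂ} (hx : x ∈ polydisc ρ)
    (j : Fin d) :
    HasSum (fun β => deriv (fun t => c β * multiPow (Function.update x j t) β) (x j))
      (pderivCoord j f x) := by
  obtain ⟨σ, hxσ, hσρ⟩ := exists_radius_between_of_mem_polydisc hx
  have hσ := fun i => (radius_pos_of_mem_polydisc hxσ i).le
  have hdom : ∀ β, ∀ t ∈ Metric.ball (0 : ℂ) (σ j),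
      ‖c β * multiPow (Function.update x j t) β‖ ≤ ‖c β * multiPow (fun i => (σ i : ℂ)) β‖ := by
    intro β t ht
    have hmem := update_mem_polydisc hxσ (mem_ball_zero_iff.1 ht)
    rw [norm_mul, norm_mul, norm_multiPow, norm_multiPow]
    refine mul_le_mul_of_nonneg_left (multiPow_le_multiPow (fun _ => norm_nonneg _)
      (fun i => ?_) β) (norm_nonneg _)
    rw [Complex.norm_real, Real.norm_of_nonneg (hσ i)]
    exact (hmem i).le
  have hsum := Complex.hasSum_deriv_of_summable_norm
    (h _ (ofReal_mem_polydisc hσ hσρ)).summable.norm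
    (fun β => by simp only [multiPow_update]; fun_prop) Metric.isOpen_ball hdom
    (mem_ball_zero_iff.2 (hxσ j))
  have hslice : (fun t => ∑' β, c β * multiPow (Function.update x j t) β) =ᶠ[𝓝 (x j)]
      fun t => f (Function.update x j t) := by
    filter_upwards [Metric.isOpen_ball.mem_nhds (mem_ball_zero_iff.2 (hx j))] with t ht
    exact (h _ (update_mem_polydisc hx (mem_ball_zero_iff.1 ht))).tsum_eq
  have hderiv := hasDerivAt_comp_update (f := f) (x := x) (j := j) (t := x j)
    (by simpa using (h.analyticOnNhd x hx).differentiableAt)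
  rwa [hslice.deriv_eq, hderiv.deriv, Function.update_eq_self] at hsum

theorem pderivCoord (h : HasMonomialSeriesOn f c ρ) (j : Fin d) :
    HasMonomialSeriesOn (pderivCoord j f) (fun β => (β j + 1) * c (β + Pi.single j 1)) ρ := by
  intro x hx
  have hsum := h.hasSum_deriv hx j
  simp only [deriv_mul_multiPow_update] at hsum
  rw [← hasSum_add_single_iff j fun β hβ => by simp [hβ]] at hsum
  refine hsum.congr_fun fun β => ?_
  have hupdate : Function.update (β + Pi.single j 1) j 0 = Function.update β j 0 := by
    ext i
    obtain rfl | hij := eq_or_ne i j <;> simp [*]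
  have hx_eq : multiPow x β = x j ^ β j * multiPow x (Function.update β j 0) := by
    rw [← multiPow_update, Function.update_eq_self]
  rw [hupdate, hx_eq, Pi.add_apply, Pi.single_eq_same, Nat.add_sub_cancel, Nat.cast_add_one]
  ring

variable {b : (Fin d → ℕ) → ℂ}

theorem pderivCoord_of_div_multiFactorial
    (h : HasMonomialSeriesOn f (fun β => b β / multiFactorial β) ρ) (j : Fin d) :
    HasMonomialSeriesOn (_root_.pderivCoord j f)
      (fun β => b (β + Pi.single j 1) / multiFactorial β) ρ := by
  convert h.pderivCoord j using 2 with β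
  have hβ : (multiFactorial β : ℂ) ≠ 0 := Nat.cast_ne_zero.2 (multiFactorial_ne_zero β)
  have hj : (β j + 1 : ℂ) ≠ 0 := Nat.cast_add_one_ne_zero _
  rw [multiFactorial_add_single, Nat.cast_mul, Nat.cast_add_one]
  field_simp

theorem iterate_pderivCoord (h : HasMonomialSeriesOn f (fun β => b β / multiFactorial β) ρ)
    (j : Fin d) (n : ℕ) :
    HasMonomialSeriesOn ((_root_.pderivCoord j)^[n] f)
      (fun β => b (β + Pi.single j n) / multiFactorial β) ρ := by
  induction n with
  | zero => simpa using h
  | succ n ih =>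
    rw [Function.iterate_succ_apply']
    simpa only [add_assoc, ← Pi.single_add, add_comm 1 n] using
      ih.pderivCoord_of_div_multiFactorial j

theorem foldr_pderivCoord (h : HasMonomialSeriesOn f (fun β => b β / multiFactorial β) ρ)
    (γ : Fin d → ℕ) (l : List (Fin d)) :
    HasMonomialSeriesOn (l.foldr (fun j g => (_root_.pderivCoord j)^[γ j] g) f)
      (fun β => b (β + (l.map fun j => Pi.single j (γ j)).sum) / multiFactorial β) ρ := by
  induction l with
  | nil => simpa using h
  | cons j l ih =>
    simpa only [List.foldr_cons, List.map_cons, List.sum_cons, add_assoc] using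
      ih.iterate_pderivCoord j (γ j)

theorem mixedPartial_zero (h : HasMonomialSeriesOn f c ρ) (hρ : ∀ j, 0 < ρ j) (γ : Fin d → ℕ) :
    mixedPartial γ f 0 = c γ * multiFactorial γ := by
  have hc : c = fun β => c β * multiFactorial β / multiFactorial β := by
    funext β
    rw [mul_div_cancel_right₀ _ (Nat.cast_ne_zero.2 (multiFactorial_ne_zero β))]
  rw [hc] at h
  have hsum : ((List.finRange d).map fun j => Pi.single j (γ j)).sum = γ := by
    rw [← Fin.sum_univ_def, Finset.univ_sum_single]
  simpa [mixedPartial, hsum, multiFactorial] using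
    (h.foldr_pderivCoord γ (List.finRange d)).apply_zero hρ

theorem eq_taylorCoeff (h : HasMonomialSeriesOn f c ρ) (hρ : ∀ j, 0 < ρ j) : c = taylorCoeff f := by
  funext β
  rw [taylorCoeff, h.mixedPartial_zero hρ,
    mul_div_cancel_right₀ _ (Nat.cast_ne_zero.2 (multiFactorial_ne_zero β))]

end HasMonomialSeriesOn

end PartialDerivatives

/-! ### Taylor expansion on polydiscs -/

section TaylorExpansion

theorem norm_iteratedDeriv_mul_pow_le {F : Type*} [NormedAddCommGroup F] [NormedSpace ℂ F]
    [CompleteSpace F] {φ : ℂ → F} {z : ℂ} {R M : ℝ} (hR : 0 < R)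
    (hφ : DifferentiableOn ℂ φ (Metric.ball z R)) (hM : ∀ w ∈ Metric.ball z R, ‖φ w‖ ≤ M) (n : ℕ) :
    ‖iteratedDeriv n φ z‖ * R ^ n ≤ n.factorial * M := by
  have hlim : Tendsto (fun r : ℝ => ‖iteratedDeriv n φ z‖ * r ^ n) (𝓝[<] R)
      (𝓝 (‖iteratedDeriv n φ z‖ * R ^ n)) :=
    (Continuous.tendsto (by fun_prop) R).mono_left nhdsWithin_le_nhds
  refine le_of_tendsto hlim ?_
  filter_upwards [Ioo_mem_nhdsLT hR] with r hr
  rw [← le_div_iff₀ (pow_pos hr.1 n)]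
  exact Complex.norm_iteratedDeriv_le_of_forall_mem_sphere_norm_le n hr.1
    ((hφ.mono (Metric.closedBall_subset_ball hr.2)).diffContOnCl_ball subset_rfl)
    fun w hw => hM w (Metric.sphere_subset_closedBall.trans (Metric.closedBall_subset_ball hr.2) hw)

variable {d : ℕ}

/-- The `n`-th Taylor coefficient of `t ↦ f (t, y)` at `t = 0`. -/
def headTaylorCoeff (f : (Fin (d + 1) → ℂ) → ℂ) (n : ℕ) (y : Fin d → ℂ) : ℂ :=
  (pderivCoord 0)^[n] f (Fin.cons 0 y) / n.factorial

section HeadTaylorCoeff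

variable {ρ : Fin (d + 1) → ℝ} {f : (Fin (d + 1) → ℂ) → ℂ}

theorem analyticOnNhd_headTaylorCoeff (hρ : 0 < ρ 0) (hf : AnalyticOnNhd ℂ f (polydisc ρ))
    (n : ℕ) : AnalyticOnNhd ℂ (headTaylorCoeff f n) (polydisc (Fin.tail ρ)) := by
  intro y hy
  have hcons : AnalyticAt ℂ (fun y : Fin d → ℂ => (Fin.cons 0 y : Fin (d + 1) → ℂ)) y :=
    analyticAt_pi_iff.2 <| Fin.cases (by simpa using analyticAt_const) fun i =>
      (ContinuousLinearMap.proj (R := ℂ) (φ := fun _ : Fin d => ℂ) i).analyticAt y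
  exact ((analyticOnNhd_iterate_pderivCoord hf 0 n _
    (cons_mem_polydisc (by simpa using hρ) hy)).fun_comp hcons).div_const

theorem iteratedDeriv_comp_cons (hρ : 0 < ρ 0) (hf : AnalyticOnNhd ℂ f (polydisc ρ)) {y : Fin d → ℂ}
    (hy : y ∈ polydisc (Fin.tail ρ)) (n : ℕ) :
    iteratedDeriv n (fun t => f (Fin.cons t y)) 0 = n.factorial * headTaylorCoeff f n y := by
  have hmem : (Fin.cons 0 y : Fin (d + 1) → ℂ) ∈ polydisc ρ :=
    cons_mem_polydisc (by simpa using hρ) hy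
  have hderiv := iteratedDeriv_comp_update hf hmem 0 n (Metric.mem_ball_self hρ)
  simp only [Fin.update_cons_zero] at hderiv
  rw [hderiv, headTaylorCoeff, mul_div_cancel₀ _ (Nat.cast_ne_zero.2 n.factorial_ne_zero)]

theorem differentiableOn_comp_cons (hf : AnalyticOnNhd ℂ f (polydisc ρ)) {y : Fin d → ℂ}
    (hy : y ∈ polydisc (Fin.tail ρ)) :
    DifferentiableOn ℂ (fun t => f (Fin.cons t y)) (Metric.ball 0 (ρ 0)) := by
  intro t ht
  have hmem := cons_mem_polydisc (mem_ball_zero_iff.1 ht) hy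
  simpa only [Fin.update_cons_zero] using differentiableOn_comp_update hf hmem 0 t ht

theorem norm_headTaylorCoeff_mul_pow_le (hρ : 0 < ρ 0) (hf : AnalyticOnNhd ℂ f (polydisc ρ))
    {M : ℝ} (hM : ∀ x ∈ polydisc ρ, ‖f x‖ ≤ M) {y : Fin d → ℂ} (hy : y ∈ polydisc (Fin.tail ρ))
    (n : ℕ) : ‖headTaylorCoeff f n y‖ * ρ 0 ^ n ≤ M := by
  have hbound := norm_iteratedDeriv_mul_pow_le hρ (differentiableOn_comp_cons hf hy)
    (fun t ht => hM _ (cons_mem_polydisc (mem_ball_zero_iff.1 ht) hy)) n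
  rw [iteratedDeriv_comp_cons hρ hf hy, norm_mul, Complex.norm_natCast, mul_assoc] at hbound
  exact le_of_mul_le_mul_left hbound (Nat.cast_pos.2 n.factorial_pos)

theorem hasSum_headTaylorCoeff (hf : AnalyticOnNhd ℂ f (polydisc ρ)) {x : Fin (d + 1) → ℂ}
    (hx : x ∈ polydisc ρ) :
    HasSum (fun n => headTaylorCoeff f n (Fin.tail x) * x 0 ^ n) (f x) := by
  have htail : Fin.tail x ∈ polydisc (Fin.tail ρ) := fun j => hx j.succ
  have htaylor := Complex.hasSum_taylorSeries_on_ball (differentiableOn_comp_cons hf htail)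
    (mem_ball_zero_iff.2 (hx 0))
  rw [Fin.cons_self_tail] at htaylor
  refine htaylor.congr_fun fun n => ?_
  have hn : (n.factorial : ℂ) ≠ 0 := Nat.cast_ne_zero.2 n.factorial_ne_zero
  rw [iteratedDeriv_comp_cons (radius_pos_of_mem_polydisc hx 0) hf htail, sub_zero, smul_eq_mul,
    smul_eq_mul]
  field_simp

theorem hasMonomialSeriesOn_of_headTaylorCoeff (hf : AnalyticOnNhd ℂ f (polydisc ρ))
    {c : ℕ → (Fin d → ℕ) → ℂ} {M : ℝ}
    (hc : ∀ n, HasMonomialSeriesOn (headTaylorCoeff f n) (c n) (Fin.tail ρ))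
    (hM : ∀ β : Fin (d + 1) → ℕ, ‖c (β 0) (Fin.tail β)‖ * multiPow ρ β ≤ M) :
    HasMonomialSeriesOn f (fun β => c (β 0) (Fin.tail β)) ρ := by
  intro x hx
  have hsum := (Fin.consEquiv fun _ : Fin (d + 1) => ℕ).hasSum_iff.2
    (summable_mul_multiPow hM hx).hasSum
  have hinner : ∀ n, HasSum
      (fun γ : Fin d → ℕ => c n γ * multiPow x (Fin.cons n γ : Fin (d + 1) → ℕ))
      (headTaylorCoeff f n (Fin.tail x) * x 0 ^ n) := fun n => by
    refine ((hc n (Fin.tail x) fun j => hx j.succ).mul_right (x 0 ^ n)).congr_fun fun γ => ?_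
    have hpow := multiPow_cons (x 0) (Fin.tail x) n γ
    rw [Fin.cons_self_tail] at hpow
    rw [hpow]
    ring
  rw [← (hsum.prod_fiberwise hinner).unique (hasSum_headTaylorCoeff hf hx)]
  exact (summable_mul_multiPow hM hx).hasSum

end HeadTaylorCoeff

theorem exists_hasMonomialSeriesOn {ρ : Fin d → ℝ} (hρ : ∀ j, 0 < ρ j) {f : (Fin d → ℂ) → ℂ}
    {M : ℝ} (hf : AnalyticOnNhd ℂ f (polydisc ρ)) (hM : ∀ x ∈ polydisc ρ, ‖f x‖ ≤ M) :
    ∃ c, (∀ β, ‖c β‖ * multiPow ρ β ≤ M) ∧ HasMonomialSeriesOn f c ρ := by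
  induction d generalizing M with
  | zero =>
    refine ⟨fun _ => f 0, fun β => ?_, fun x _ => ?_⟩
    · simpa [multiPow] using hM 0 (zero_mem_polydisc hρ)
    · simp [multiPow, Subsingleton.elim x 0]
  | succ d ih =>
    choose c hcM hc using fun n => ih (M := M / ρ 0 ^ n) (fun j => hρ j.succ)
      (analyticOnNhd_headTaylorCoeff (hρ 0) hf n) fun y hy =>
        (le_div_iff₀ (pow_pos (hρ 0) n)).2 (norm_headTaylorCoeff_mul_pow_le (hρ 0) hf hM hy n)
    have hbound : ∀ β : Fin (d + 1) → ℕ, ‖c (β 0) (Fin.tail β)‖ * multiPow ρ β ≤ M := fun β => by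
      have hpow := multiPow_cons (ρ 0) (Fin.tail ρ) (β 0) (Fin.tail β)
      rw [Fin.cons_self_tail, Fin.cons_self_tail] at hpow
      rw [hpow, mul_left_comm, mul_comm, ← le_div_iff₀ (pow_pos (hρ 0) _)]
      exact hcM (β 0) (Fin.tail β)
    exact ⟨_, hbound, hasMonomialSeriesOn_of_headTaylorCoeff hf hc hbound⟩

variable {ρ : Fin d → ℝ} {f : (Fin d → ℂ) → ℂ}

theorem norm_taylorCoeff_mul_multiPow_le (hρ : ∀ j, 0 < ρ j) {M : ℝ}
    (hf : AnalyticOnNhd ℂ f (polydisc ρ)) (hM : ∀ x ∈ polydisc ρ, ‖f x‖ ≤ M) (β : Fin d → ℕ) :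
    ‖taylorCoeff f β‖ * multiPow ρ β ≤ M := by
  obtain ⟨c, hcM, hc⟩ := exists_hasMonomialSeriesOn hρ hf hM
  exact hc.eq_taylorCoeff hρ ▸ hcM β

theorem hasMonomialSeriesOn_taylorCoeff (hf : AnalyticOnNhd ℂ f (polydisc ρ)) :
    HasMonomialSeriesOn f (taylorCoeff f) ρ := by
  intro x hx
  obtain ⟨σ, hxσ, hσρ⟩ := exists_radius_between_of_mem_polydisc hx
  obtain ⟨M, hM⟩ := exists_norm_le_on_polydisc hσρ hf.continuousOn
  have hσ := radius_pos_of_mem_polydisc hxσ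
  obtain ⟨c, -, hc⟩ := exists_hasMonomialSeriesOn hσ
    (hf.mono (polydisc_mono fun j => (hσρ j).le)) hM
  exact hc.eq_taylorCoeff hσ ▸ hc x hxσ

end TaylorExpansion

/-! ### Division by a coordinate -/

section CoordinateSlope

variable {d : ℕ} {ρ : Fin d → ℝ} {f : (Fin d → ℂ) → ℂ} {c : (Fin d → ℕ) → ℂ}

/-- The difference quotient `(f x - f x') / x j`, where `x'` is `x` with `j`-th coordinate `0`,
continued by the partial derivative to `x j = 0`. -/
def coordSlope (j : Fin d) (f : (Fin d → ℂ) → ℂ) (x : Fin d → ℂ) : ℂ :=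
  dslope (fun t => f (Function.update x j t)) 0 (x j)

theorem HasMonomialSeriesOn.sub_comp_update_zero (h : HasMonomialSeriesOn f c ρ) {x : Fin d → ℂ}
    (hx : x ∈ polydisc ρ) (j : Fin d) :
    HasSum (fun β => x j * (c (β + Pi.single j 1) * multiPow x β))
      (f x - f (Function.update x j 0)) := by
  have hx₀ : Function.update x j 0 ∈ polydisc ρ :=
    update_mem_polydisc hx (by simpa using radius_pos_of_mem_polydisc hx j)
  have hsum := (h x hx).sub (h _ hx₀)
  rw [← hasSum_add_single_iff j] at hsum
  · refine hsum.congr_fun fun β => ?_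
    have hvanish : multiPow (Function.update x j 0) (β + Pi.single j 1) = 0 :=
      multiPow_eq_zero (j := j) (Function.update_self ..) (by simp)
    rw [hvanish, multiPow_add, multiPow_single]
    ring
  · intro β hβ
    have hx_eq := multiPow_update x j (x j) β
    rw [Function.update_eq_self] at hx_eq
    rw [hx_eq, multiPow_update, hβ, pow_zero, pow_zero, sub_self]

theorem HasMonomialSeriesOn.coordSlope (h : HasMonomialSeriesOn f c ρ) (j : Fin d) :
    HasMonomialSeriesOn (coordSlope j f) (fun β => c (β + Pi.single j 1)) ρ := by
  intro x hx
  obtain hxj | hxj := eq_or_ne (x j) 0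
  · have hvalue : _root_.coordSlope j f x = _root_.pderivCoord j f x := by
      have hderiv := hasDerivAt_comp_update (f := f) (x := x) (j := j) (t := x j)
        (by simpa using (h.analyticOnNhd x hx).differentiableAt)
      rw [_root_.coordSlope, hxj, dslope_same, ← hxj, hderiv.deriv, Function.update_eq_self]
    rw [hvalue]
    refine (h.pderivCoord j x hx).congr_fun fun β => ?_
    obtain hβ | hβ := eq_or_ne (β j) 0
    · simp only [hβ, Nat.cast_zero, zero_add, one_mul]
    · rw [multiPow_eq_zero hxj hβ, mul_zero, mul_zero]
  · have hvalue : _root_.coordSlope j f x = (x j)⁻¹ * (f x - f (Function.update x j 0)) := by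
      rw [_root_.coordSlope, dslope_of_ne _ hxj, slope_def_module, sub_zero, smul_eq_mul,
        Function.update_eq_self]
    rw [hvalue]
    refine ((h.sub_comp_update_zero hx j).mul_left (x j)⁻¹).congr_fun fun β => ?_
    rw [inv_mul_cancel_left₀ hxj]

theorem norm_coordSlope_le (hf : AnalyticOnNhd ℂ f (polydisc ρ)) {M : ℝ}
    (hM : ∀ x ∈ polydisc ρ, ‖f x‖ ≤ M) {x : Fin d → ℂ} (hx : x ∈ polydisc ρ) (j : Fin d) :
    ‖coordSlope j f x‖ ≤ 2 / ρ j * M := by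
  have hslice : ∀ t ∈ Metric.ball (0 : ℂ) (ρ j), ‖f (Function.update x j t)‖ ≤ M := fun t ht =>
    hM _ (update_mem_polydisc hx (mem_ball_zero_iff.1 ht))
  refine (Complex.norm_dslope_le_div_of_mapsTo_ball (R₂ := 2 * M)
    (differentiableOn_comp_update hf hx j) (fun t ht => ?_)
    (mem_ball_zero_iff.2 (hx j))).trans_eq (by ring)
  rw [mem_closedBall_iff_norm, two_mul]
  exact norm_sub_le_of_le (hslice t ht)
    (hslice 0 (Metric.mem_ball_self (radius_pos_of_mem_polydisc hx j)))

end CoordinateSlope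

/-! ### Division in a Banach algebra -/

theorem exists_quotient_operator {𝕜 A : Type*} [NontriviallyNormedField 𝕜] [NormedCommRing A]
    [NormedAlgebra 𝕜 A] [CompleteSpace A] {S : A →L[𝕜] A} {m p : A} {k : 𝕜}
    (hS : ∀ f, S (f * m) = f) (hp : ‖S‖ * ‖p - k • m‖ < ‖k‖) :
    ∃ Q : A →L[𝕜] A, ∀ g q, S (g - q * p) = 0 ↔ q = Q g := by
  let N : A →L[𝕜] A := S ∘L (ContinuousLinearMap.mul 𝕜 A).flip (k • m - p)
  have hN : ‖N‖ * ‖(1 : A →L[𝕜] A)‖ < ‖k‖ := calc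
    ‖N‖ * ‖(1 : A →L[𝕜] A)‖ ≤ ‖N‖ * 1 := by gcongr; exact ContinuousLinearMap.norm_id_le
    _ ≤ ‖S‖ * ‖(ContinuousLinearMap.mul 𝕜 A).flip (k • m - p)‖ := by
        rw [mul_one]; exact ContinuousLinearMap.opNorm_comp_le _ _
    _ ≤ ‖S‖ * ‖p - k • m‖ := by
        gcongr
        rw [norm_sub_rev]
        exact ContinuousLinearMap.opNorm_le_bound _ (norm_nonneg _) fun q =>
          (norm_mul_le _ _).trans_eq (mul_comm _ _)
    _ < ‖k‖ := hp
  obtain ⟨T, hT⟩ : IsUnit (algebraMap 𝕜 (A →L[𝕜] A) k - N) :=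
    spectrum.mem_resolventSet_of_norm_lt_mul hN
  have hTq : ∀ q, (T : A →L[𝕜] A) q = S (q * p) := fun q => by
    have hNq : N q = k • q - S (q * p) := calc
      N q = S (q * (k • m - p)) := rfl
      _ = k • q - S (q * p) := by rw [mul_sub, mul_smul_comm, map_sub, map_smul, hS]
    simp [hT, hNq, Algebra.algebraMap_eq_smul_one]
  refine ⟨(↑T⁻¹ : A →L[𝕜] A) * S, fun g q => ?_⟩
  rw [map_sub, ← hTq, sub_eq_zero]
  constructor
  · intro h
    rw [mul_apply_eq_comp, h, ← mul_apply_eq_comp, T.inv_mul,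
      one_apply_eq_self]
  · rintro rfl
    rw [← mul_apply_eq_comp, T.mul_inv_cancel_left]

/-! ### The Banach algebra of bounded holomorphic functions -/

section BoundedHolomorphic

variable {d : ℕ} {ρ : Fin d → ℝ}

/-- The algebra of bounded holomorphic functions on a polydisc, with the supremum norm. Its elements
are functions on the subtype; holomorphy is expressed through an extension to the ambient space. -/
def boundedHolomorphic (ρ : Fin d → ℝ) : Subalgebra ℂ (polydisc ρ →ᵇ ℂ) where
  carrier := {f | ∃ F : (Fin d → ℂ) → ℂ, AnalyticOnNhd ℂ F (polydisc ρ) ∧ ∀ x, f x = F x}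
  mul_mem' := by
    rintro f g ⟨F, hF, hfF⟩ ⟨G, hG, hgG⟩
    exact ⟨F * G, hF.mul hG, fun x => congrArg₂ (· * ·) (hfF x) (hgG x)⟩
  add_mem' := by
    rintro f g ⟨F, hF, hfF⟩ ⟨G, hG, hgG⟩
    exact ⟨F + G, hF.add hG, fun x => congrArg₂ (· + ·) (hfF x) (hgG x)⟩
  algebraMap_mem' k := ⟨fun _ => k, analyticOnNhd_const, fun _ => rfl⟩

namespace boundedHolomorphic

theorem exists_of_analyticOnNhd {F : (Fin d → ℂ) → ℂ} (hF : AnalyticOnNhd ℂ F (polydisc ρ)) {M : ℝ}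
    (hM : ∀ x ∈ polydisc ρ, ‖F x‖ ≤ M) : ∃ f : boundedHolomorphic ρ, ∀ x, f.1 x = F x :=
  ⟨⟨.ofNormedAddCommGroup (fun x : polydisc ρ => F x) hF.continuousOn.domRestrict M
    fun x => hM x x.2, F, hF, fun _ => rfl⟩, fun _ => rfl⟩

theorem norm_le_of_apply_eq {f : boundedHolomorphic ρ} {F : (Fin d → ℂ) → ℂ}
    (hf : ∀ x, f.1 x = F x) {M : ℝ} (hM₀ : 0 ≤ M) (hM : ∀ x ∈ polydisc ρ, ‖F x‖ ≤ M) : ‖f‖ ≤ M :=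
  (BoundedContinuousFunction.norm_le hM₀).2 fun x => hf x ▸ hM x x.2

/-- The extension by zero of a bounded holomorphic function to the ambient space. -/
def extension (f : boundedHolomorphic ρ) : (Fin d → ℂ) → ℂ :=
  Function.extend Subtype.val f.1 0

theorem extension_apply (f : boundedHolomorphic ρ) (x : polydisc ρ) : extension f x = f.1 x :=
  Subtype.val_injective.extend_apply ..

theorem analyticOnNhd_extension (f : boundedHolomorphic ρ) :
    AnalyticOnNhd ℂ (extension f) (polydisc ρ) := by
  obtain ⟨F, hF, hfF⟩ := f.2
  exact hF.congr (isOpen_polydisc ρ) fun x hx =>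
    (hfF ⟨x, hx⟩).symm.trans (extension_apply f ⟨x, hx⟩).symm

theorem norm_extension_le (f : boundedHolomorphic ρ) {x : Fin d → ℂ} (hx : x ∈ polydisc ρ) :
    ‖extension f x‖ ≤ ‖f‖ :=
  extension_apply f ⟨x, hx⟩ ▸ f.1.norm_coe_le_norm ⟨x, hx⟩

theorem taylorCoeff_extension_eq (hρ : ∀ j, 0 < ρ j) {f : boundedHolomorphic ρ}
    {F : (Fin d → ℂ) → ℂ} {c : (Fin d → ℕ) → ℂ} (hF : HasMonomialSeriesOn F c ρ)
    (hf : ∀ x, f.1 x = F x) : taylorCoeff (extension f) = c :=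
  ((hF.congr fun x hx => (hf ⟨x, hx⟩).symm.trans
    (extension_apply f ⟨x, hx⟩).symm).eq_taylorCoeff hρ).symm

/-- The Taylor coefficients at the origin, as a linear map. -/
def coeff (hρ : ∀ j, 0 < ρ j) : boundedHolomorphic ρ →ₗ[ℂ] (Fin d → ℕ) → ℂ where
  toFun f := taylorCoeff (extension f)
  map_add' f g := taylorCoeff_extension_eq hρ
    ((hasMonomialSeriesOn_taylorCoeff (analyticOnNhd_extension f)).add
      (hasMonomialSeriesOn_taylorCoeff (analyticOnNhd_extension g)))
    fun x => congrArg₂ (· + ·) (extension_apply f x).symm (extension_apply g x).symm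
  map_smul' k f := taylorCoeff_extension_eq hρ
    ((hasMonomialSeriesOn_taylorCoeff (analyticOnNhd_extension f)).const_smul k)
    fun x => congrArg (k * ·) (extension_apply f x).symm

variable (hρ : ∀ j, 0 < ρ j)

theorem hasMonomialSeriesOn_coeff (f : boundedHolomorphic ρ) :
    HasMonomialSeriesOn (extension f) (coeff hρ f) ρ :=
  hasMonomialSeriesOn_taylorCoeff (analyticOnNhd_extension f)

theorem coeff_eq_of_hasMonomialSeriesOn {f : boundedHolomorphic ρ} {F : (Fin d → ℂ) → ℂ}
    {c : (Fin d → ℕ) → ℂ} (hF : HasMonomialSeriesOn F c ρ) (hf : ∀ x, f.1 x = F x) :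
    coeff hρ f = c :=
  taylorCoeff_extension_eq hρ hF hf

theorem coeff_injective : Function.Injective (coeff hρ) := by
  intro f g hfg
  ext x
  have hg := hasMonomialSeriesOn_coeff hρ g x x.2
  rw [← hfg] at hg
  rw [← extension_apply, ← extension_apply, (hasMonomialSeriesOn_coeff hρ f x x.2).unique hg]

theorem norm_coeff_mul_multiPow_le (f : boundedHolomorphic ρ) (β : Fin d → ℕ) :
    ‖coeff hρ f β‖ * multiPow ρ β ≤ ‖f‖ :=
  norm_taylorCoeff_mul_multiPow_le hρ (analyticOnNhd_extension f)
    (fun _ hx => norm_extension_le f hx) β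

theorem uniformContinuous_coeff (β : Fin d → ℕ) : UniformContinuous fun f => coeff hρ f β := by
  let coeffβ : boundedHolomorphic ρ →ₗ[ℂ] ℂ := LinearMap.proj β ∘ₗ coeff hρ
  refine (coeffβ.mkContinuous (multiPow ρ β)⁻¹ fun f => ?_).uniformContinuous
  rw [← div_eq_inv_mul, le_div_iff₀ (multiPow_pos hρ β)]
  exact norm_coeff_mul_multiPow_le hρ f β

theorem isClosed (hρ : ∀ j, 0 < ρ j) :
    IsClosed (boundedHolomorphic ρ : Set (polydisc ρ →ᵇ ℂ)) := by
  refine IsSeqClosed.isClosed fun u f hu hf => ?_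
  lift u to ℕ → boundedHolomorphic ρ using hu
  have hcauchy : CauchySeq u :=
    isUniformEmbedding_subtype_val.isUniformInducing.cauchy_map_iff.1 hf.cauchySeq
  obtain ⟨M, hM⟩ := isBounded_iff_forall_norm_le.1 hcauchy.isBounded_range
  choose c hc using fun β =>
    cauchySeq_tendsto_of_complete ((uniformContinuous_coeff hρ β).comp_cauchySeq hcauchy)
  have hseries : HasMonomialSeriesOn (Function.extend Subtype.val f 0) c ρ := by
    refine hasMonomialSeriesOn_of_tendsto (fun n => hasMonomialSeriesOn_coeff hρ (u n))
      (fun n β => (norm_coeff_mul_multiPow_le hρ (u n) β).trans (hM _ (mem_range_self n))) hc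
      fun x hx => ?_
    lift x to polydisc ρ using hx
    simp only [extension_apply, Subtype.val_injective.extend_apply]
    exact (BoundedContinuousFunction.tendsto_iff_tendstoUniformly.1 hf).tendsto_at x
  exact ⟨_, hseries.analyticOnNhd, fun x => (Subtype.val_injective.extend_apply ..).symm⟩

theorem completeSpace (hρ : ∀ j, 0 < ρ j) : CompleteSpace (boundedHolomorphic ρ) :=
  (isClosed hρ).completeSpace_coe

theorem exists_coordShift (j : Fin d) : ∃ S : boundedHolomorphic ρ →L[ℂ] boundedHolomorphic ρ,
    ‖S‖ ≤ 2 / ρ j ∧ ∀ f β, coeff hρ (S f) β = coeff hρ f (β + Pi.single j 1) := by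
  have hslope (f : boundedHolomorphic ρ) := (hasMonomialSeriesOn_coeff hρ f).coordSlope j
  have hbound (f : boundedHolomorphic ρ) {x : Fin d → ℂ} (hx : x ∈ polydisc ρ) :
      ‖coordSlope j (extension f) x‖ ≤ 2 / ρ j * ‖f‖ :=
    norm_coordSlope_le (analyticOnNhd_extension f) (fun _ hy => norm_extension_le f hy) hx j
  choose S hS using fun f =>
    exists_of_analyticOnNhd (hslope f).analyticOnNhd fun _ hx => hbound f hx
  have hcoeff (f : boundedHolomorphic ρ) :
      coeff hρ (S f) = fun β => coeff hρ f (β + Pi.single j 1) :=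
    coeff_eq_of_hasMonomialSeriesOn hρ (hslope f) (hS f)
  let shift : boundedHolomorphic ρ →ₗ[ℂ] boundedHolomorphic ρ :=
    { toFun := S
      map_add' := fun f g => coeff_injective hρ <| by
        rw [map_add, hcoeff, hcoeff, hcoeff, map_add]
        rfl
      map_smul' := fun k f => coeff_injective hρ <| by
        rw [RingHom.id_apply, map_smul, hcoeff, hcoeff, map_smul]
        rfl }
  have hρj : 0 ≤ 2 / ρ j := div_nonneg zero_le_two (hρ j).le
  exact ⟨shift.mkContinuous (2 / ρ j) fun f => norm_le_of_apply_eq (hS f)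
      (mul_nonneg hρj (norm_nonneg f)) fun _ hx => hbound f hx,
    LinearMap.mkContinuous_norm_le _ hρj _, fun f => congrFun (hcoeff f)⟩

theorem exists_monomialShift (a : Fin d → ℕ) :
    ∃ S : boundedHolomorphic ρ →L[ℂ] boundedHolomorphic ρ,
      ‖S‖ ≤ multiPow (fun j => 2 / ρ j) a ∧ ∀ f β, coeff hρ (S f) β = coeff hρ f (β + a) := by
  let HasShift (a : Fin d → ℕ) : Prop := ∃ S : boundedHolomorphic ρ →L[ℂ] boundedHolomorphic ρ,
    ‖S‖ ≤ multiPow (fun j => 2 / ρ j) a ∧ ∀ f β, coeff hρ (S f) β = coeff hρ f (β + a)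
  have hzero : HasShift 0 :=
    ⟨.id ℂ _, by simpa only [multiPow_zero_right] using ContinuousLinearMap.norm_id_le,
      fun _ _ => rfl⟩
  have hadd : ∀ a b, HasShift a → HasShift b → HasShift (a + b) := by
    rintro a b ⟨S, hS, hSc⟩ ⟨T, hT, hTc⟩
    refine ⟨T ∘L S, ?_, fun f β => ?_⟩
    · rw [multiPow_add, mul_comm]
      exact (ContinuousLinearMap.opNorm_comp_le T S).trans
        (mul_le_mul hT hS (norm_nonneg S) ((norm_nonneg T).trans hT))
    · rw [ContinuousLinearMap.comp_apply, hTc, hSc, add_assoc, add_comm b a]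
  refine Pi.single_induction HasShift a hzero hadd fun j n => ?_
  induction n with
  | zero => simpa only [Pi.single_zero] using hzero
  | succ n ih =>
    rw [Pi.single_add]
    refine hadd _ _ ih ?_
    obtain ⟨S, hS, hSc⟩ := exists_coordShift hρ j
    exact ⟨S, by simpa only [multiPow_single, pow_one] using hS, hSc⟩

theorem exists_apply_eq_multiPow (ρ : Fin d → ℝ) (a : Fin d → ℕ) :
    ∃ m : boundedHolomorphic ρ, ∀ x, m.1 x = multiPow x.1 a :=
  exists_of_analyticOnNhd (F := fun x => multiPow x a) (M := multiPow ρ a)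
    (fun x _ => Finset.analyticAt_fun_prod _ fun j _ =>
      ((ContinuousLinearMap.proj (R := ℂ) (φ := fun _ : Fin d => ℂ) j).analyticAt x).pow _)
    fun x hx => by
    rw [norm_multiPow]
    exact multiPow_le_multiPow (fun j => norm_nonneg _) (fun j => (hx j).le) a

theorem coeff_mul_monomial_add {m : boundedHolomorphic ρ} {a : Fin d → ℕ}
    (hm : ∀ x, m.1 x = multiPow x.1 a) (f : boundedHolomorphic ρ) (β : Fin d → ℕ) :
    coeff hρ (f * m) (β + a) = coeff hρ f β := by
  rw [coeff_eq_of_hasMonomialSeriesOn hρ ((hasMonomialSeriesOn_coeff hρ f).mul_multiPow a)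
    fun x => congrArg₂ (· * ·) (extension_apply f x).symm (hm x)]
  exact (add_left_injective a).extend_apply ..

theorem coeff_eq_taylorCoeff {f : boundedHolomorphic ρ} {F : (Fin d → ℂ) → ℂ}
    (hF : AnalyticOnNhd ℂ F (polydisc ρ)) (hf : ∀ x, f.1 x = F x) :
    coeff hρ f = taylorCoeff F :=
  coeff_eq_of_hasMonomialSeriesOn hρ (hasMonomialSeriesOn_taylorCoeff hF) hf

theorem forall_coeff_add_eq_zero_iff {f : boundedHolomorphic ρ} {F : (Fin d → ℂ) → ℂ}
    (hF : AnalyticOnNhd ℂ F (polydisc ρ)) (hf : ∀ x, f.1 x = F x) {a : Fin d → ℕ} :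
    (∀ β, coeff hρ f (β + a) = 0) ↔ ∀ β, (∀ j, a j ≤ β j) → mixedPartial β F 0 = 0 := by
  simp only [coeff_eq_taylorCoeff hρ hF hf, taylorCoeff_eq_zero_iff]
  refine ⟨fun h β hβ => ?_, fun h β => h _ fun j => Nat.le_add_left ..⟩
  simpa only [tsub_add_cancel_of_le (show a ≤ β from hβ)] using h (β - a)

theorem exists_division_operator {p m : boundedHolomorphic ρ} {a : Fin d → ℕ} {k : ℂ}
    (hm : ∀ x, m.1 x = multiPow x.1 a)
    (hp : multiPow (fun j => 2 / ρ j) a * ‖p - k • m‖ < ‖k‖) :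
    ∃ Q : boundedHolomorphic ρ →L[ℂ] boundedHolomorphic ρ,
      ∀ g q, (∀ β, coeff hρ (g - q * p) (β + a) = 0) ↔ q = Q g := by
  have := completeSpace hρ
  obtain ⟨S, hS_norm, hS⟩ := exists_monomialShift hρ a
  have hSm (f : boundedHolomorphic ρ) : S (f * m) = f := coeff_injective hρ <| funext fun β => by
    rw [hS, coeff_mul_monomial_add hρ hm]
  have hS_eq_zero (f : boundedHolomorphic ρ) : S f = 0 ↔ ∀ β, coeff hρ f (β + a) = 0 := by
    simp only [← hS, ← map_eq_zero_iff (coeff hρ) (coeff_injective hρ), funext_iff, Pi.zero_apply]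
  obtain ⟨Q, hQ⟩ := exists_quotient_operator hSm
    ((mul_le_mul_of_nonneg_right hS_norm (norm_nonneg _)).trans_lt hp)
  exact ⟨Q, fun g q => by rw [← hS_eq_zero, hQ]⟩

end boundedHolomorphic

end BoundedHolomorphic

/-! ### Smallness of the non-dominant terms -/

section Domination

theorem multiPow_rpow {ι : Type*} [Fintype ι] {s : ℝ} (hs : 0 < s) (ℓ : ι → ℝ) (β : ι → ℕ) :
    multiPow (fun j => s ^ ℓ j) β = s ^ ∑ j, ℓ j * (β j : ℝ) := by
  simp only [multiPow, Real.rpow_sum_of_pos hs, Real.rpow_mul hs.le, Real.rpow_natCast]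

theorem eventually_forall_rpow_lt {ι : Type*} [Finite ι] {ℓ : ι → ℝ} (hℓ : ∀ j, 0 < ℓ j) {ρ : ι → ℝ}
    (hρ : ∀ j, 0 < ρ j) : ∀ᶠ s : ℝ in 𝓝[>] 0, ∀ j, s ^ ℓ j < ρ j :=
  eventually_all.2 fun j =>
    (((Real.continuous_rpow_const (hℓ j).le).tendsto' 0 0 (Real.zero_rpow (hℓ j).ne')).mono_left
      nhdsWithin_le_nhds).eventually_lt_const (hρ j)

theorem tendsto_tsum_mul_rpow_zero {α : Type*} {w e : α → ℝ} (hw : ∀ i, 0 ≤ w i)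
    (he : ∀ i, w i ≠ 0 → 0 < e i) {t : ℝ} (ht : 0 < t) (hsum : Summable fun i => w i * t ^ e i) :
    Tendsto (fun s : ℝ => ∑' i, w i * s ^ e i) (𝓝[>] 0) (𝓝 0) := by
  suffices h : Tendsto (fun s : ℝ => ∑' i, w i * s ^ e i) (𝓝[>] 0) (𝓝 (∑' _ : α, 0)) by
    rwa [tsum_zero] at h
  refine tendsto_tsum_of_dominated_convergence hsum (fun i => ?_) ?_
  · obtain hwi | hwi := eq_or_ne (w i) 0
    · simp only [hwi, zero_mul, tendsto_const_nhds]
    · have hpow := (Real.continuous_rpow_const (he i hwi).le).tendsto' 0 0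
        (Real.zero_rpow (he i hwi).ne')
      simpa only [mul_zero] using (hpow.mono_left nhdsWithin_le_nhds).const_mul (w i)
  · filter_upwards [Ioc_mem_nhdsGT ht] with s ⟨hs₀, hst⟩ i
    rw [Real.norm_of_nonneg (mul_nonneg (hw i) (Real.rpow_nonneg hs₀.le _))]
    obtain hwi | hwi := eq_or_ne (w i) 0
    · simp only [hwi, zero_mul, le_refl]
    · exact mul_le_mul_of_nonneg_left (Real.rpow_le_rpow hs₀.le hst (he i hwi).le) (hw i)

theorem eventually_tsum_mul_multiPow_le {ι : Type*} [Fintype ι] {ℓ : ι → ℝ} {w : (ι → ℕ) → ℝ}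
    {a : ι → ℕ} (hw : ∀ β, 0 ≤ w β)
    (hmin : ∀ β, w β ≠ 0 → ∑ j, ℓ j * (a j : ℝ) < ∑ j, ℓ j * (β j : ℝ)) {t : ℝ} (ht : 0 < t)
    (hsum : Summable fun β => w β * multiPow (fun j => t ^ ℓ j) β) {ε : ℝ} (hε : 0 < ε) :
    ∀ᶠ s : ℝ in 𝓝[>] 0, ∑' β, w β * multiPow (fun j => s ^ ℓ j) β ≤
      ε * multiPow (fun j => s ^ ℓ j) a := by
  let e (β : ι → ℕ) : ℝ := ∑ j, ℓ j * (β j : ℝ) - ∑ j, ℓ j * (a j : ℝ)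
  have hrescale {s : ℝ} (hs : 0 < s) (β : ι → ℕ) :
      w β * multiPow (fun j => s ^ ℓ j) β = w β * s ^ e β * multiPow (fun j => s ^ ℓ j) a := by
    rw [multiPow_rpow hs, multiPow_rpow hs, mul_assoc, ← Real.rpow_add hs, sub_add_cancel]
  have hpos {s : ℝ} (hs : 0 < s) : 0 < multiPow (fun j => s ^ ℓ j) a :=
    multiPow_pos (fun j => Real.rpow_pos_of_pos hs (ℓ j)) a
  have hsum' : Summable fun β => w β * t ^ e β :=
    (summable_mul_right_iff (hpos ht).ne').1 (hsum.congr (hrescale ht))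
  have hlim := tendsto_tsum_mul_rpow_zero hw (fun β hβ => sub_pos.2 (hmin β hβ)) ht hsum'
  filter_upwards [hlim.eventually_le_const hε, self_mem_nhdsWithin] with s hsε hs
  rw [tsum_congr (hrescale hs), tsum_mul_right]
  exact mul_le_mul_of_nonneg_right hsε (hpos hs).le

namespace HasMonomialSeriesOn

variable {ι : Type*} [Fintype ι] {ρ : ι → ℝ} {f : (ι → ℂ) → ℂ} {c : (ι → ℕ) → ℂ}

theorem summable_norm_mul_multiPow (h : HasMonomialSeriesOn f c ρ) {σ : ι → ℝ}
    (hσ₀ : ∀ j, 0 ≤ σ j) (hσ : ∀ j, σ j < ρ j) : Summable fun β => ‖c β‖ * multiPow σ β := by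
  refine (h _ (ofReal_mem_polydisc hσ₀ hσ)).summable.norm.congr fun β => ?_
  simp only [norm_mul, norm_multiPow, Complex.norm_real, Real.norm_of_nonneg (hσ₀ _)]

theorem norm_le_tsum (h : HasMonomialSeriesOn f c ρ)
    (hc : Summable fun β => ‖c β‖ * multiPow ρ β) {x : ι → ℂ} (hx : x ∈ polydisc ρ) :
    ‖f x‖ ≤ ∑' β, ‖c β‖ * multiPow ρ β := by
  rw [← (h x hx).tsum_eq]
  refine tsum_of_norm_bounded hc.hasSum fun β => ?_
  rw [norm_mul, norm_multiPow]
  gcongr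
  exact multiPow_le_multiPow (fun _ => norm_nonneg _) (fun j => (hx j).le) β

theorem sub_monomial (h : HasMonomialSeriesOn f c ρ) (a : ι → ℕ) :
    HasMonomialSeriesOn (fun x => f x - c a * multiPow x a) (Function.update c a 0) ρ := by
  intro x hx
  have hupdate := (h x hx).update a 0
  rw [zero_sub, neg_add_eq_sub] at hupdate
  refine hupdate.congr_fun fun β => ?_
  obtain rfl | hβ := eq_or_ne β a <;> simp [*]

theorem eventually_norm_sub_monomial_le (h : HasMonomialSeriesOn f c ρ) (hρ : ∀ j, 0 < ρ j)
    {ℓ : ι → ℝ} (hℓ : ∀ j, 0 < ℓ j) {a : ι → ℕ}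
    (hmin : ∀ β, c β ≠ 0 → β ≠ a → ∑ j, ℓ j * (a j : ℝ) < ∑ j, ℓ j * (β j : ℝ))
    {ε : ℝ} (hε : 0 < ε) :
    ∀ᶠ s : ℝ in 𝓝[>] 0, ∀ x ∈ polydisc fun j => s ^ ℓ j,
      ‖f x - c a * multiPow x a‖ ≤ ε * multiPow (fun j => s ^ ℓ j) a := by
  have hsummable {s : ℝ} (hs : 0 < s) (hsρ : ∀ j, s ^ ℓ j < ρ j) :=
    (h.sub_monomial a).summable_norm_mul_multiPow (fun j => (Real.rpow_pos_of_pos hs (ℓ j)).le) hsρ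
  have hmin' (β : ι → ℕ) (hβ : ‖Function.update c a 0 β‖ ≠ 0) :
      ∑ j, ℓ j * (a j : ℝ) < ∑ j, ℓ j * (β j : ℝ) := by
    obtain rfl | hβa := eq_or_ne β a
    · simp at hβ
    · exact hmin β (by simpa [hβa] using hβ) hβa
  obtain ⟨t, htρ, ht⟩ := ((eventually_forall_rpow_lt hℓ hρ).and self_mem_nhdsWithin).exists
  filter_upwards [eventually_tsum_mul_multiPow_le (fun _ => norm_nonneg _) hmin' ht
    (hsummable ht htρ) hε, eventually_forall_rpow_lt hℓ hρ, self_mem_nhdsWithin]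
    with s hsε hsρ hs x hx
  exact (((h.sub_monomial a).mono fun j => (hsρ j).le).norm_le_tsum (hsummable hs hsρ) hx).trans hsε

end HasMonomialSeriesOn

end Domination

/-! ### Weierstrass division -/

section Division

variable {d : ℕ} {ρ : Fin d → ℝ} {P : (Fin d → ℂ) → ℂ} {a : Fin d → ℕ}

/-- Unique division by `P` of the bounded holomorphic functions on `D`, with remainders having no
Taylor coefficients in `a + ℕ^d`, and with operator bound `C`. -/
def AdmitsWeierstrassDivision (P : (Fin d → ℂ) → ℂ) (a : Fin d → ℕ) (D : Set (Fin d → ℂ))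
    (C : ℝ) : Prop :=
  ∀ g : (Fin d → ℂ) → ℂ, AnalyticOnNhd ℂ g D → (∃ Mg, ∀ x ∈ D, ‖g x‖ ≤ Mg) →
    ∃ q r : (Fin d → ℂ) → ℂ,
      AnalyticOnNhd ℂ q D ∧ AnalyticOnNhd ℂ r D ∧
      (∀ x ∈ D, g x = q x * P x + r x) ∧
      (∀ β : Fin d → ℕ, (∀ j, a j ≤ β j) → mixedPartial β r 0 = 0) ∧
      (∀ Mg : ℝ, (∀ x ∈ D, ‖g x‖ ≤ Mg) →
        (∀ x ∈ D, ‖q x‖ ≤ C * Mg) ∧ (∀ x ∈ D, ‖r x‖ ≤ C * Mg)) ∧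
      (∀ q' r' : (Fin d → ℂ) → ℂ, AnalyticOnNhd ℂ q' D → AnalyticOnNhd ℂ r' D →
        (∃ M', ∀ x ∈ D, ‖q' x‖ ≤ M' ∧ ‖r' x‖ ≤ M') →
        (∀ x ∈ D, g x = q' x * P x + r' x) →
        (∀ β : Fin d → ℕ, (∀ j, a j ≤ β j) → mixedPartial β r' 0 = 0) →
        ∀ x ∈ D, q' x = q x ∧ r' x = r x)

namespace boundedHolomorphic

theorem admitsWeierstrassDivision_of_operator (hρ : ∀ j, 0 < ρ j) {p : boundedHolomorphic ρ}
    (hpP : ∀ x, p.1 x = P x) {Q : boundedHolomorphic ρ →L[ℂ] boundedHolomorphic ρ}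
    (hQ : ∀ g q, (∀ β, coeff hρ (g - q * p) (β + a) = 0) ↔ q = Q g) :
    AdmitsWeierstrassDivision P a (polydisc ρ) (1 + ‖Q‖ + ‖Q‖ * ‖p‖) := by
  rintro g hg ⟨Mg, hMg⟩
  obtain ⟨G, hG⟩ := exists_of_analyticOnNhd hg hMg
  set R : boundedHolomorphic ρ := G - Q G * p with hR
  refine ⟨extension (Q G), extension R, analyticOnNhd_extension _, analyticOnNhd_extension _,
    fun x hx => ?_, ?_, fun M hM => ?_, ?_⟩
  · lift x to polydisc ρ using hx
    rw [extension_apply, extension_apply, ← hG, ← hpP]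
    exact (add_sub_cancel ((Q G).1 x * p.1 x) (G.1 x)).symm
  · rw [← forall_coeff_add_eq_zero_iff hρ (analyticOnNhd_extension R)
      fun x => (extension_apply R x).symm]
    exact (hQ G (Q G)).2 rfl
  · have hM₀ : 0 ≤ M := (norm_nonneg _).trans (hM 0 (zero_mem_polydisc hρ))
    have hG_norm : ‖G‖ ≤ M := norm_le_of_apply_eq hG hM₀ hM
    have hQG : ‖Q G‖ ≤ ‖Q‖ * M := Q.le_opNorm_of_le hG_norm
    have hR_norm : ‖R‖ ≤ M + ‖Q‖ * M * ‖p‖ :=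
      norm_sub_le_of_le hG_norm (norm_mul_le_of_le hQG le_rfl)
    have hQM : 0 ≤ ‖Q‖ * M := by positivity
    have hQMp : 0 ≤ ‖Q‖ * M * ‖p‖ := by positivity
    exact ⟨fun x hx => (norm_extension_le _ hx).trans (by linarith),
      fun x hx => (norm_extension_le _ hx).trans (by linarith)⟩
  · rintro q' r' hq' hr' ⟨M', hM'⟩ hdiv hrem
    obtain ⟨q, hq⟩ := exists_of_analyticOnNhd hq' fun x hx => (hM' x hx).1
    obtain ⟨r, hr⟩ := exists_of_analyticOnNhd hr' fun x hx => (hM' x hx).2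
    have hr_eq : r = G - q * p := by
      ext x
      exact eq_sub_of_add_eq' (by rw [hr, hG, hdiv x x.2, ← hpP, ← hq]; rfl)
    have hq_eq : q = Q G := by
      rw [← hQ, ← hr_eq, forall_coeff_add_eq_zero_iff hρ hr' hr]
      exact hrem
    intro x hx
    lift x to polydisc ρ using hx
    rw [extension_apply, extension_apply, ← hq, ← hr, hR, ← hq_eq, ← hr_eq]
    exact ⟨rfl, rfl⟩

end boundedHolomorphic

open boundedHolomorphic in
theorem exists_admitsWeierstrassDivision (hρ : ∀ j, 0 < ρ j)
    (hP : AnalyticOnNhd ℂ P (polydisc ρ)) {k : ℂ} {ε : ℝ} (hk : 2 ^ (∑ j, a j) * ε < ‖k‖)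
    (hε : ∀ x ∈ polydisc ρ, ‖P x - k * multiPow x a‖ ≤ ε * multiPow ρ a) :
    ∃ C > 0, AdmitsWeierstrassDivision P a (polydisc ρ) C := by
  obtain ⟨m, hm⟩ := exists_apply_eq_multiPow ρ a
  have hP_norm : ∀ x ∈ polydisc ρ, ‖P x‖ ≤ ε * multiPow ρ a + ‖k‖ * ‖m‖ := fun x hx => by
    have hkm : ‖k * multiPow x a‖ ≤ ‖k‖ * ‖m‖ :=
      norm_mul_le_of_le le_rfl (hm ⟨x, hx⟩ ▸ m.1.norm_coe_le_norm ⟨x, hx⟩)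
    simpa only [sub_add_cancel] using norm_add_le_of_le (hε x hx) hkm
  obtain ⟨p, hp⟩ := exists_of_analyticOnNhd hP hP_norm
  have hpm : ‖p - k • m‖ ≤ ε * multiPow ρ a :=
    norm_le_of_apply_eq (F := fun x => P x - k * multiPow x a)
      (fun x => congrArg₂ (fun z w => z - k * w) (hp x) (hm x))
      ((norm_nonneg _).trans (hε 0 (zero_mem_polydisc hρ))) hε
  have hsmall : multiPow (fun j => 2 / ρ j) a * ‖p - k • m‖ < ‖k‖ := calc
    multiPow (fun j => 2 / ρ j) a * ‖p - k • m‖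
      ≤ 2 ^ (∑ j, a j) / multiPow ρ a * (ε * multiPow ρ a) := by
        rw [multiPow_div, multiPow_const]
        gcongr
        exact div_nonneg (by positivity) (multiPow_pos hρ a).le
    _ = 2 ^ (∑ j, a j) * ε := by
        have := (multiPow_pos hρ a).ne'
        field_simp
    _ < ‖k‖ := hk
  obtain ⟨Q, hQ⟩ := exists_division_operator hρ hm hsmall
  exact ⟨_, by positivity, admitsWeierstrassDivision_of_operator hρ hp hQ⟩

theorem weierstrass_division_bounded_holomorphic_general {ℓ : Fin d → ℝ} (hℓ : ∀ j, 0 < ℓ j)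
    {r₀ : ℝ} (hr₀ : 0 < r₀) (hP : AnalyticOnNhd ℂ P (polydisk d r₀)) (ha : mixedPartial a P 0 ≠ 0)
    (hmin : ∀ β : Fin d → ℕ, mixedPartial β P 0 ≠ 0 → β ≠ a →
      ∑ j, ℓ j * (a j : ℝ) < ∑ j, ℓ j * (β j : ℝ)) :
    ∃ s₀ > 0, ∀ s : ℝ, 0 < s → s ≤ s₀ →
      weightedPolydisk d ℓ s ⊆ polydisk d r₀ ∧
      ∃ C > 0, AdmitsWeierstrassDivision P a (weightedPolydisk d ℓ s) C := by
  have hseries : HasMonomialSeriesOn P (taylorCoeff P) fun _ => r₀ :=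
    hasMonomialSeriesOn_taylorCoeff hP
  obtain ⟨ε, hε₀, hε⟩ : ∃ ε > 0, 2 ^ (∑ j, a j) * ε < ‖taylorCoeff P a‖ :=
    exists_pos_mul_lt (norm_pos_iff.2 (taylorCoeff_eq_zero_iff.not.2 ha)) _
  have hdominant := hseries.eventually_norm_sub_monomial_le (fun _ => hr₀) hℓ
    (fun β hβ => hmin β (taylorCoeff_eq_zero_iff.not.1 hβ)) hε₀
  obtain ⟨s₀, hs₀, hsub⟩ := mem_nhdsGT_iff_exists_Ioc_subset.1
    ((eventually_forall_rpow_lt hℓ fun _ => hr₀).and hdominant)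
  refine ⟨s₀, hs₀, fun s hs hss₀ => ?_⟩
  obtain ⟨hsr, hs_dominant⟩ := hsub ⟨hs, hss₀⟩
  have hD : weightedPolydisk d ℓ s ⊆ polydisk d r₀ := polydisc_mono fun j => (hsr j).le
  exact ⟨hD, exists_admitsWeierstrassDivision (fun j => Real.rpow_pos_of_pos hs (ℓ j))
    (hP.mono hD) hε hs_dominant⟩

end Division

/-- **Weierstrass division for bounded holomorphic functions** (Lemma 2.7).
With `ℓ` an injective linear form with positive coefficients and `P` holomorphic near `0`,
not identically zero, `P(0) = 0`, with `ℓ`-minimal Taylor exponent `a`, there is `s₀ > 0`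
such that for `0 < s ≤ s₀` every bounded holomorphic `g` on `D_s` can be divided as
`g = q·P + r` with `q, r` bounded holomorphic on `D_s`, the Taylor coefficients of `r`
supported off `a + ℕ^d`, uniform bounds `sup|q|, sup|r| ≤ C·sup|g|`, and uniqueness. -/
theorem weierstrass_division_bounded_holomorphic
    (d : ℕ) (hd : 1 ≤ d) (ℓ : Fin d → ℝ) (hℓpos : ∀ j, 0 < ℓ j)
    (hℓinj : Function.Injective fun β : Fin d → ℕ => ∑ j, ℓ j * (β j : ℝ))
    (r0 : ℝ) (hr0 : 0 < r0)
    (P : (Fin d → ℂ) → ℂ) (hP : AnalyticOnNhd ℂ P (polydisk d r0))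
    (hPne : ∃ x ∈ polydisk d r0, P x ≠ 0) (hP0 : P 0 = 0)
    (a : Fin d → ℕ)
    (ha : mixedPartial a P 0 ≠ 0)
    (hamin : ∀ β : Fin d → ℕ, mixedPartial β P 0 ≠ 0 → β ≠ a →
      ∑ j, ℓ j * (a j : ℝ) < ∑ j, ℓ j * (β j : ℝ)) :
    ∃ s0 > 0, ∀ s : ℝ, 0 < s → s ≤ s0 →
      weightedPolydisk d ℓ s ⊆ polydisk d r0 ∧
      ∃ C > 0,
        ∀ g : (Fin d → ℂ) → ℂ, AnalyticOnNhd ℂ g (weightedPolydisk d ℓ s) →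
          (∃ Mg, ∀ x ∈ weightedPolydisk d ℓ s, ‖g x‖ ≤ Mg) →
          ∃ q r : (Fin d → ℂ) → ℂ,
            AnalyticOnNhd ℂ q (weightedPolydisk d ℓ s) ∧
            AnalyticOnNhd ℂ r (weightedPolydisk d ℓ s) ∧
            (∀ x ∈ weightedPolydisk d ℓ s, g x = q x * P x + r x) ∧
            (∀ β : Fin d → ℕ, (∀ j, a j ≤ β j) → mixedPartial β r 0 = 0) ∧
            (∀ Mg : ℝ, (∀ x ∈ weightedPolydisk d ℓ s, ‖g x‖ ≤ Mg) →
              (∀ x ∈ weightedPolydisk d ℓ s, ‖q x‖ ≤ C * Mg) ∧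
              (∀ x ∈ weightedPolydisk d ℓ s, ‖r x‖ ≤ C * Mg)) ∧
            (∀ q' r' : (Fin d → ℂ) → ℂ,
              AnalyticOnNhd ℂ q' (weightedPolydisk d ℓ s) →
              AnalyticOnNhd ℂ r' (weightedPolydisk d ℓ s) →
              (∃ M', ∀ x ∈ weightedPolydisk d ℓ s,
                ‖q' x‖ ≤ M' ∧ ‖r' x‖ ≤ M') →
              (∀ x ∈ weightedPolydisk d ℓ s, g x = q' x * P x + r' x) →
              (∀ β : Fin d → ℕ, (∀ j, a j ≤ β j) → mixedPartial β r' 0 = 0) →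
              ∀ x ∈ weightedPolydisk d ℓ s, q' x = q x ∧ r' x = r x) :=
  weierstrass_division_bounded_holomorphic_general hℓpos hr0 hP ha hamin
end
end
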